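/- Let t > 0. For every bounded continuous function f : ℝ^d → ℝ, the sums ∑_{v∈ℤ^d} x_{⌊t/ε⌋}(v) f(εv) converge, as ε → 0⁺, to (Γ(d/2+1)/(π^{d/2} (det Q)^{1/2} t^d)) ∫_{{y : ⟨y, Q⁻¹y⟩ ≤ t²}} f(y) dy. (Weak convergence of the Jacobi polynomial iteration to the fundamental solution of the Euler–Poisson–Darboux equation.) -/

import Mathlib

open MeasureTheory Matrix Filter Topology Real

noncomputable section

def latticeConv {d : ℕ} (ω x : (Fin d → ℤ) → ℝ) : (Fin d → ℤ) → ℝ :=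
  fun v => ∑' η : Fin d → ℤ, ω (v - η) * x η

def covQ (d : ℕ) (ω : (Fin d → ℤ) → ℝ) : Matrix (Fin d) (Fin d) ℝ :=
  Matrix.of fun i j => ∑' v : Fin d → ℤ, ω v * (v i : ℝ) * (v j : ℝ)

def ftOmega {d : ℕ} (ω : (Fin d → ℤ) → ℝ) (ξ : Fin d → ℝ) : ℂ :=
  ∑' v : Fin d → ℤ, (ω v : ℂ) * Complex.exp (Complex.I * ((∑ i, ξ i * (v i : ℝ) : ℝ) : ℂ))

def aCoef0 (d : ℕ) : ℝ := ((d : ℝ) + 4) / (2 * (2 + (d : ℝ)))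
def bCoef0 (d : ℕ) : ℝ := (d : ℝ) / (2 * (2 + (d : ℝ)))
def aCoef (d n : ℕ) : ℝ :=
  (2 * (n : ℝ) + (d : ℝ)/2 + 1) * (2 * (n : ℝ) + (d : ℝ)/2 + 2) / (2 * ((n : ℝ) + 1 + (d : ℝ)/2)^2)
def bCoef (d n : ℕ) : ℝ :=
  (d : ℝ)^2 * (2 * (n : ℝ) + (d : ℝ)/2 + 1) / (8 * ((n : ℝ) + 1 + (d : ℝ)/2)^2 * (2 * (n : ℝ) + (d : ℝ)/2))
def cCoef (d n : ℕ) : ℝ :=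
  (n : ℝ)^2 * (2 * (n : ℝ) + (d : ℝ)/2 + 2) / (((n : ℝ) + 1 + (d : ℝ)/2)^2 * (2 * (n : ℝ) + (d : ℝ)/2))

def besselJ (ν z : ℝ) : ℝ :=
  ∑' m : ℕ, ((-1 : ℝ)^m / ((m.factorial : ℝ) * Real.Gamma ((m : ℝ) + ν + 1))) * (z / 2) ^ (2 * (m : ℝ) + ν)

def jacobiP (α β : ℝ) (n : ℕ) (x : ℝ) : ℝ :=
  ∑ s ∈ Finset.range (n + 1),
    (Real.Gamma ((n : ℝ) + α + 1) / (Real.Gamma (α + (s : ℝ) + 1) * ((n - s).factorial : ℝ))) *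
    (Real.Gamma ((n : ℝ) + β + 1) / (Real.Gamma ((n : ℝ) + β - (s : ℝ) + 1) * (s.factorial : ℝ))) *
    ((x - 1) / 2) ^ s * ((x + 1) / 2) ^ (n - s)

def jacobiPi (α β : ℝ) (n : ℕ) (x : ℝ) : ℝ := jacobiP α β n x / jacobiP α β n 1

def pd {d : ℕ} (j : Fin d) (g : (Fin d → ℝ) → ℝ) : (Fin d → ℝ) → ℝ :=
  fun y => deriv (fun s => g (Function.update y j s)) (y j)

/-!
The recurrence is the three-term recurrence of the Jacobi polynomials `p_n` of parameters
`(d / 2, 0)`, normalized to be `1` at the right end point and here written in the variable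
`s = (1 - x) / 2`. The Fourier transform of the iterate `x_n` is therefore `p_n ((1 - ω̂) / 2)`.
Since `(1 - ω̂ (ε ξ)) / 2` is close to `ε² ⟨ξ, Q ξ⟩ / 4`, the Mehler–Heine asymptotics of `p_n` show
that the characteristic functions of the rescaled iterates converge to a Bessel function, which is
the Fourier transform of the uniform probability on the ellipsoid `⟨y, Q⁻¹ y⟩ ≤ t²`.

The iterates are signed, so tightness has to be replaced by a uniform `ℓ¹` bound. Sonin's energy
method gives `|p_n s|² ≤ C (1 + n √s) ^ (-(d + 1))`; by Parseval the `ℓ²` norm of `x_n` is then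
`O(n ^ (-d / 2))`, and Cauchy–Schwarz on the `O(n ^ d)` points of its support bounds the `ℓ¹` norm.
With a fixed compact set carrying all the rescaled iterates, the Stone–Weierstrass theorem passes
from characters to continuous functions.
-/

/-! ### Shifted Jacobi polynomials -/

section ShiftedJacobi

open Polynomial

/-- The coefficient of `s ^ k` in the hypergeometric series `₂F₁(-ν, ν + α + 1; α + 1; s)`. -/
def jacobiCoeff (α ν : ℝ) (k : ℕ) : ℝ :=
  ∏ j ∈ Finset.range k, (-((ν - j) * (ν + α + 1 + j)) / ((j + 1) * (α + 1 + j)))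

lemma jacobiCoeff_zero (α ν : ℝ) : jacobiCoeff α ν 0 = 1 := by simp [jacobiCoeff]

lemma jacobiCoeff_succ (α ν : ℝ) (k : ℕ) :
    jacobiCoeff α ν (k + 1) =
      jacobiCoeff α ν k * (-((ν - k) * (ν + α + 1 + k)) / ((k + 1) * (α + 1 + k))) :=
  Finset.prod_range_succ _ _

lemma jacobiCoeff_eq_zero_of_lt (α : ℝ) {n k : ℕ} (h : n < k) : jacobiCoeff α n k = 0 :=
  Finset.prod_eq_zero (Finset.mem_range.2 h) (by simp)

lemma mul_jacobiCoeff_add_one {α ν : ℝ} (hα : 0 < α) (hν : 0 ≤ ν) (k : ℕ) :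
    (ν + α + 1) * jacobiCoeff α (ν + 1) (k + 1) = jacobiCoeff α ν k *
      (-((ν + 1) * (ν + α + k + 1) * (ν + α + k + 2)) / ((k + 1) * (α + 1 + k))) := by
  induction k with
  | zero =>
    have : α + 1 ≠ 0 := by positivity
    simp only [jacobiCoeff_succ, jacobiCoeff_zero]
    push_cast
    field_simp
    ring
  | succ k ih =>
    have h₁ : α + 1 + k ≠ 0 := by positivity
    have h₂ : α + 1 + (k + 1) ≠ 0 := by positivity
    rw [jacobiCoeff_succ, ← mul_assoc, ih, jacobiCoeff_succ α ν k]
    push_cast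
    field_simp
    ring

lemma mul_jacobiCoeff_sub_one {α : ℝ} (hα : 0 < α) (ν : ℝ) (k : ℕ) :
    ν * jacobiCoeff α (ν - 1) (k + 1) = jacobiCoeff α ν k *
      (-((ν - k) * (ν - k - 1) * (ν + α)) / ((k + 1) * (α + 1 + k))) := by
  induction k with
  | zero =>
    have : α + 1 ≠ 0 := by positivity
    simp only [jacobiCoeff_succ, jacobiCoeff_zero]
    push_cast
    field_simp
    ring
  | succ k ih =>
    have h₁ : α + 1 + k ≠ 0 := by positivity
    have h₂ : α + 1 + (k + 1) ≠ 0 := by positivity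
    rw [jacobiCoeff_succ, ← mul_assoc, ih, jacobiCoeff_succ α ν k]
    push_cast
    field_simp
    ring

/-- The Jacobi polynomial with parameters `(α, 0)`, normalized to be `1` at `x = 1`, in the variable
`s = (1 - x) / 2`. -/
def shiftedJacobi (α : ℝ) (n : ℕ) : ℝ[X] :=
  ∑ k ∈ Finset.range (n + 1), monomial k (jacobiCoeff α n k)

lemma coeff_shiftedJacobi (α : ℝ) (n k : ℕ) :
    (shiftedJacobi α n).coeff k = jacobiCoeff α n k := by
  simp only [shiftedJacobi, finsetSum_coeff, coeff_monomial, Finset.sum_ite_eq', Finset.mem_range]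
  split_ifs with h
  · rfl
  · exact (jacobiCoeff_eq_zero_of_lt α (by lia)).symm

lemma natDegree_shiftedJacobi_le (α : ℝ) (n : ℕ) : (shiftedJacobi α n).natDegree ≤ n :=
  natDegree_le_iff_coeff_eq_zero.2 fun k hk ↦ by
    rw [coeff_shiftedJacobi, jacobiCoeff_eq_zero_of_lt α hk]

lemma eval_shiftedJacobi (α : ℝ) (n : ℕ) (s : ℝ) :
    (shiftedJacobi α n).eval s = ∑ k ∈ Finset.range (n + 1), jacobiCoeff α n k * s ^ k := by
  simp [shiftedJacobi, eval_finsetSum]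

lemma eval_zero_shiftedJacobi (α : ℝ) (n : ℕ) : (shiftedJacobi α n).eval 0 = 1 := by
  rw [← coeff_zero_eq_eval_zero, coeff_shiftedJacobi, jacobiCoeff_zero]

lemma shiftedJacobi_zero (α : ℝ) : shiftedJacobi α 0 = 1 := by
  simp [shiftedJacobi, jacobiCoeff_zero]

lemma shiftedJacobi_one (d : ℕ) :
    shiftedJacobi (d / 2) 1 = C (aCoef0 d) * (1 - C 2 * X) + C (bCoef0 d) := by
  have hd : (2 : ℝ) + d ≠ 0 := by positivity
  ext k
  rcases k with _ | _ | k
  · simp [coeff_shiftedJacobi, jacobiCoeff_zero, aCoef0, bCoef0]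
    field_simp
    ring
  · simp [coeff_shiftedJacobi, jacobiCoeff_succ, jacobiCoeff_zero, aCoef0, coeff_one]
    field_simp
    ring
  · rw [coeff_shiftedJacobi, jacobiCoeff_eq_zero_of_lt _ (by lia)]
    simp [coeff_one]

lemma shiftedJacobi_add_two {d : ℕ} (hd : 1 ≤ d) (n : ℕ) :
    shiftedJacobi (d / 2) (n + 2) =
      C (aCoef d (n + 1)) * ((1 - C 2 * X) * shiftedJacobi (d / 2) (n + 1))
        + C (bCoef d (n + 1)) * shiftedJacobi (d / 2) (n + 1)
        - C (cCoef d (n + 1)) * shiftedJacobi (d / 2) n := by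
  obtain ⟨α, hα⟩ : ∃ α : ℝ, d = 2 * α := ⟨d / 2, by ring⟩
  have hα₀ : 0 < α := by linarith [show (1 : ℝ) ≤ d from mod_cast hd]
  simp only [aCoef, bCoef, cCoef, hα, sub_mul, one_mul, mul_assoc (C (2 : ℝ)),
    mul_div_cancel_left₀ α two_ne_zero]
  ext k
  rcases k with _ | k
  · simp only [coeff_add, coeff_sub, coeff_C_mul, coeff_X_mul_zero, coeff_shiftedJacobi,
      jacobiCoeff_zero]
    push_cast
    field_simp
    ring
  · have h_up := mul_jacobiCoeff_add_one hα₀ (by positivity : (0 : ℝ) ≤ n + 1) k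
    have h_down := mul_jacobiCoeff_sub_one hα₀ ((n : ℝ) + 1) k
    rw [add_sub_cancel_right, mul_comm, ← eq_div_iff (by positivity)] at h_down
    rw [mul_comm, ← eq_div_iff (by positivity), add_assoc (n : ℝ) 1 1, one_add_one_eq_two] at h_up
    simp only [coeff_add, coeff_sub, coeff_C_mul, coeff_X_mul, coeff_shiftedJacobi]
    push_cast
    rw [h_up, h_down, jacobiCoeff_succ]
    have h₁ : (n : ℝ) + 1 + 1 + α ≠ 0 := by positivity
    have h₂ : α + 1 + k ≠ 0 := by positivity
    field_simp
    ring

lemma shiftedJacobi_ode {α : ℝ} (hα : 0 < α) (n : ℕ) (s : ℝ) :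
    s * (1 - s) * (shiftedJacobi α n).derivative.derivative.eval s
      + (α + 1 - (α + 2) * s) * (shiftedJacobi α n).derivative.eval s
      + n * (n + α + 1) * (shiftedJacobi α n).eval s = 0 := by
  set p := shiftedJacobi α n with hp
  have h : X * derivative (derivative p) - X * (X * derivative (derivative p))
      + C (α + 1) * derivative p - C (α + 2) * (X * derivative p)
      + C ((n : ℝ) * (n + α + 1)) * p = 0 := by
    ext k
    rcases k with _ | _ | k <;>
      simp only [coeff_add, coeff_sub, coeff_C_mul, coeff_X_mul, coeff_X_mul_zero,
        coeff_derivative, hp, coeff_shiftedJacobi, coeff_zero]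
    · rw [jacobiCoeff_succ]
      push_cast
      field_simp
      ring
    · rw [jacobiCoeff_succ α n (0 + 1)]
      push_cast
      field_simp
      ring
    · have : α + 1 + (k + 2) ≠ 0 := by positivity
      rw [jacobiCoeff_succ α n (k + 1 + 1)]
      push_cast
      field_simp
      ring
  have := congrArg (eval s) h
  simp only [eval_add, eval_sub, eval_mul, eval_X, eval_C, eval_zero] at this
  linear_combination this

end ShiftedJacobi

/-! ### Sonin's monotonicity method and decay of the Jacobi polynomials -/

section Sonin

/-- The derivative of `y² + k w²` is `(k' - 2c) w²`. -/
lemma antitoneOn_sq_add_mul_sq {I : Set ℝ} (hI : Convex ℝ I) {y w w' k k' a c : ℝ → ℝ}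
    (hy : ∀ s ∈ I, HasDerivAt y (a s * w s) s) (hw : ∀ s ∈ I, HasDerivAt w (w' s) s)
    (hk : ∀ s ∈ I, HasDerivAt k (k' s) s)
    (ode : ∀ s ∈ I, k s * w' s = -(a s * y s) - c s * w s) (hkc : ∀ s ∈ I, k' s ≤ 2 * c s) :
    AntitoneOn (fun s ↦ y s ^ 2 + k s * w s ^ 2) I := by
  have hderiv (s) (hs : s ∈ I) :
      HasDerivAt (fun s ↦ y s ^ 2 + k s * w s ^ 2) ((k' s - 2 * c s) * w s ^ 2) s := by
    refine (((hy s hs).fun_pow 2).add ((hk s hs).mul ((hw s hs).fun_pow 2))).congr_deriv ?_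
    push_cast
    linear_combination 2 * w s * ode s hs
  refine antitoneOn_of_deriv_nonpos hI (fun s hs ↦ (hderiv s hs).continuousAt.continuousWithinAt)
    (fun s hs ↦ (hderiv s (interior_subset hs)).differentiableAt.differentiableWithinAt)
    fun s hs ↦ ?_
  rw [(hderiv s (interior_subset hs)).deriv]
  exact mul_nonpos_of_nonpos_of_nonneg (sub_nonpos.2 (hkc s (interior_subset hs))) (sq_nonneg _)

variable {α : ℝ} {n : ℕ} {s s₀ : ℝ}

lemma shiftedJacobi_sq_add_derivative_sq_le (hα : 0 < α) (hn : n ≠ 0)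
    (hs : s ∈ Set.Icc (0 : ℝ) (1 / 2)) :
    (shiftedJacobi α n).eval s ^ 2 +
      s * (1 - s) / (n * (n + α + 1)) * (shiftedJacobi α n).derivative.eval s ^ 2 ≤ 1 := by
  set l : ℝ := n * (n + α + 1)
  have hl : 0 < l := by positivity
  have h := antitoneOn_sq_add_mul_sq (convex_Icc (0 : ℝ) (1 / 2)) (a := fun _ ↦ 1)
    (k := fun s ↦ s * (1 - s) / l) (k' := fun s ↦ (1 - 2 * s) / l)
    (c := fun s ↦ (α + 1 - (α + 2) * s) / l)
    (fun s _ ↦ ((shiftedJacobi α n).hasDerivAt s).congr_deriv (one_mul _).symm)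
    (fun s _ ↦ (shiftedJacobi α n).derivative.hasDerivAt s)
    (fun s _ ↦ (((hasDerivAt_id' s).mul ((hasDerivAt_id' s).const_sub 1)).div_const l).congr_deriv
      (by ring))
    (fun s _ ↦ by
      field_simp
      linear_combination shiftedJacobi_ode hα n s)
    (fun s hs ↦ by
      rw [← mul_div_assoc]
      gcongr
      nlinarith [hs.1, hs.2])
    (by simp) hs hs.1
  simpa [eval_zero_shiftedJacobi] using h

lemma shiftedJacobi_sq_le_one (hα : 0 < α) (hn : n ≠ 0) (hs : s ∈ Set.Icc (0 : ℝ) (1 / 2)) :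
    (shiftedJacobi α n).eval s ^ 2 ≤ 1 := by
  have : 0 ≤ s * (1 - s) / (n * (n + α + 1)) :=
    div_nonneg (mul_nonneg hs.1 (by linarith [hs.2])) (by positivity)
  exact (le_add_of_nonneg_right (by positivity)).trans
    (shiftedJacobi_sq_add_derivative_sq_le hα hn hs)

/-- `liouvilleWeight α s * p s` satisfies an equation `u'' + q u = 0` without first-order term in
the variable `arcsin √s` when `p` is the Jacobi polynomial. -/
def liouvilleWeight (α s : ℝ) : ℝ := s ^ (α / 2 + 1 / 4) * (1 - s) ^ (1 / 4 : ℝ)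

/-- Up to the factor `liouvilleWeight α s / (s * (1 - s))`, the derivative of
`liouvilleWeight α s * p s`. -/
def liouvilleDeriv (α : ℝ) (n : ℕ) (s : ℝ) : ℝ :=
  s * (1 - s) * (shiftedJacobi α n).derivative.eval s
    + (α + 1 / 2 - (α + 1) * s) / 2 * (shiftedJacobi α n).eval s

/-- The potential `q` of the Liouville normal form, multiplied by `s * (1 - s) / 4`. -/
def liouvillePotential (α : ℝ) (n : ℕ) (s : ℝ) : ℝ :=
  (1 - s) * ((n + (α + 1) / 2) ^ 2 * s - (α ^ 2 - 1 / 4) / 4) + s / 16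

lemma hasDerivAt_liouvilleWeight (hs₀ : 0 < s) (hs₁ : s < 1) :
    HasDerivAt (liouvilleWeight α)
      (liouvilleWeight α s * ((α + 1 / 2 - (α + 1) * s) / 2 / (s * (1 - s)))) s := by
  have h := ((hasDerivAt_id' s).rpow_const (p := α / 2 + 1 / 4) (.inl hs₀.ne')).mul
    (((hasDerivAt_id' s).const_sub 1).rpow_const (p := 1 / 4) (.inl (sub_pos.2 hs₁).ne'))
  refine h.congr_deriv ?_
  have : 1 - s ≠ 0 := (sub_pos.2 hs₁).ne'
  rw [rpow_sub_one hs₀.ne', rpow_sub_one this, liouvilleWeight]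
  field_simp
  ring

lemma hasDerivAt_liouvilleDeriv (hα : 0 < α) (n : ℕ) (hs₀ : 0 < s) (hs₁ : s < 1) :
    HasDerivAt (liouvilleDeriv α n)
      (((1 / 2 - s - (α + 1 / 2 - (α + 1) * s) / 2) * liouvilleDeriv α n s
        - liouvillePotential α n s * (shiftedJacobi α n).eval s) / (s * (1 - s))) s := by
  have h_coeff : HasDerivAt (fun s ↦ (α + 1 / 2 - (α + 1) * s) / 2) (-(α + 1) / 2) s :=
    ((((hasDerivAt_id' s).const_mul (α + 1)).const_sub (α + 1 / 2)).div_const 2).congr_deriv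
      (by ring)
  have h := (((hasDerivAt_id' s).fun_mul ((hasDerivAt_id' s).const_sub 1)).fun_mul
    ((shiftedJacobi α n).derivative.hasDerivAt s)).add
      (h_coeff.fun_mul ((shiftedJacobi α n).hasDerivAt s))
  refine h.congr_deriv ?_
  have : 1 - s ≠ 0 := (sub_pos.2 hs₁).ne'
  rw [eq_div_iff (by positivity), liouvilleDeriv, liouvillePotential]
  linear_combination s * (1 - s) * shiftedJacobi_ode hα n s

lemma le_liouvillePotential (hα : 0 < α) (hs : (α + 1) ^ 2 ≤ n ^ 2 * s) (hs₀ : 0 < s)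
    (hs₁ : s < 1) : (1 - s) * ((α + 1) ^ 2 / 2) ≤ liouvillePotential α n s := by
  have h : (n : ℝ) ^ 2 * s ≤ (n + (α + 1) / 2) ^ 2 * s := by
    gcongr
    linarith
  have : (1 - s) * ((α + 1) ^ 2 / 2) ≤
      (1 - s) * ((n + (α + 1) / 2) ^ 2 * s - (α ^ 2 - 1 / 4) / 4) := by
    refine mul_le_mul_of_nonneg_left ?_ (sub_pos.2 hs₁).le
    nlinarith
  rw [liouvillePotential]
  linarith

lemma hasDerivAt_liouvillePotential (α : ℝ) (n : ℕ) (s : ℝ) :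
    HasDerivAt (liouvillePotential α n)
      ((n + (α + 1) / 2) ^ 2 * (1 - 2 * s) + α ^ 2 / 4) s :=
  ((((hasDerivAt_id' s).const_sub 1).mul
    (((hasDerivAt_id' s).const_mul ((n + (α + 1) / 2) ^ 2)).sub_const _)).add
      ((hasDerivAt_id' s).div_const 16)).congr_deriv (by ring)

/-- Equivalently, `liouvillePotential α n s / (s * (1 - s))` increases on `(0, 1)`. -/
lemma mul_liouvillePotential_le (hα : 1 / 2 ≤ α) (n : ℕ) (s : ℝ) :
    (1 - 2 * s) * liouvillePotential α n s ≤
      ((n + (α + 1) / 2) ^ 2 * (1 - 2 * s) + α ^ 2 / 4) * (s * (1 - s)) := by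
  have hα' : 0 ≤ α ^ 2 - 1 / 4 := by nlinarith
  have h : 0 ≤ (α ^ 2 - 1 / 4) * (1 - s) ^ 2 / 4 + s ^ 2 / 16 := by positivity
  rw [liouvillePotential]
  linarith

lemma antitoneOn_liouville_energy (hα : 1 / 2 ≤ α) (hs₀ : 0 < s₀)
    (hns₀ : (α + 1) ^ 2 ≤ n ^ 2 * s₀) :
    AntitoneOn (fun s ↦ (liouvilleWeight α s * (shiftedJacobi α n).eval s) ^ 2
      + (liouvillePotential α n s)⁻¹ * (liouvilleWeight α s * liouvilleDeriv α n s) ^ 2)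
      (Set.Ico s₀ 1) := by
  have hα₀ : 0 < α := by linarith
  have h_range (s) (hs : s ∈ Set.Ico s₀ 1) :
      0 < s ∧ 0 < 1 - s ∧ 0 < liouvillePotential α n s := by
    have hs' : 0 < s := hs₀.trans_le hs.1
    have hs₁ : 0 < 1 - s := sub_pos.2 hs.2
    refine ⟨hs', hs₁, lt_of_lt_of_le (by positivity) (le_liouvillePotential hα₀ ?_ hs' hs.2)⟩
    exact hns₀.trans (by gcongr; exact hs.1)
  refine antitoneOn_sq_add_mul_sq (convex_Ico s₀ 1) (a := fun s ↦ (s * (1 - s))⁻¹)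
    (c := fun s ↦ -((1 - 2 * s) / (2 * (s * (1 - s)) * liouvillePotential α n s)))
    (fun s hs ↦ ?_)
    (fun s hs ↦ (hasDerivAt_liouvilleWeight (h_range s hs).1 hs.2).fun_mul
      (hasDerivAt_liouvilleDeriv hα₀ n (h_range s hs).1 hs.2))
    (fun s hs ↦ (hasDerivAt_liouvillePotential α n s).inv (h_range s hs).2.2.ne')
    (fun s hs ↦ ?_) (fun s hs ↦ ?_)
  all_goals obtain ⟨hs', hs₁, hD⟩ := h_range s hs
  · refine ((hasDerivAt_liouvilleWeight hs' hs.2).fun_mul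
      ((shiftedJacobi α n).hasDerivAt s)).congr_deriv ?_
    rw [liouvilleDeriv]
    field_simp
    ring
  · field_simp
    ring
  · rw [mul_neg, neg_div, neg_le_neg_iff, mul_div_assoc', div_le_div_iff₀ (by positivity)
      (by positivity)]
    nlinarith [mul_le_mul_of_nonneg_left (mul_liouvillePotential_le hα n s)
      (by positivity : 0 ≤ 2 * liouvillePotential α n s)]

lemma liouville_energy_le (hα : 0 < α) (hn : n ≠ 0) (hns : n ^ 2 * s = (α + 1) ^ 2)
    (hs₁ : s ≤ 1 / 2) :
    (shiftedJacobi α n).eval s ^ 2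
      + (liouvillePotential α n s)⁻¹ * liouvilleDeriv α n s ^ 2 ≤ 8 * α + 19 := by
  have hs₀ : 0 < s := pos_of_mul_pos_right (hns ▸ by positivity) (sq_nonneg (n : ℝ))
  have hs₁' : 0 ≤ 1 - s := by linarith
  have h_sonin := shiftedJacobi_sq_add_derivative_sq_le hα hn ⟨hs₀.le, hs₁⟩
  have hp := shiftedJacobi_sq_le_one hα hn ⟨hs₀.le, hs₁⟩
  have hp' : s * (1 - s) * (shiftedJacobi α n).derivative.eval s ^ 2 ≤ n * (n + α + 1) := by
    have := (le_add_of_nonneg_left (sq_nonneg _)).trans h_sonin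
    rwa [div_mul_eq_mul_div, div_le_one (by positivity)] at this
  have hD : (α + 1) ^ 2 / 4 ≤ liouvillePotential α n s :=
    le_trans (by nlinarith) (le_liouvillePotential hα hns.ge hs₀ (by linarith))
  have h_derivative : (s * (1 - s) * (shiftedJacobi α n).derivative.eval s) ^ 2
      ≤ (α + 1) ^ 2 * (α + 2) :=
    calc (s * (1 - s) * (shiftedJacobi α n).derivative.eval s) ^ 2
        = s * (1 - s) * (s * (1 - s) * (shiftedJacobi α n).derivative.eval s ^ 2) := by ring
      _ ≤ s * (n * (n + α + 1)) := by gcongr; nlinarith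
      _ ≤ s * (n * (n * (α + 2))) := by
        have : (1 : ℝ) ≤ n := mod_cast Nat.one_le_iff_ne_zero.2 hn
        gcongr
        nlinarith
      _ = (α + 1) ^ 2 * (α + 2) := by rw [← hns]; ring
  have h_value : ((α + 1 / 2 - (α + 1) * s) / 2 * (shiftedJacobi α n).eval s) ^ 2
      ≤ (α + 1) ^ 2 / 4 := by
    rw [mul_pow]
    have : ((α + 1 / 2 - (α + 1) * s) / 2) ^ 2 ≤ ((α + 1) / 2) ^ 2 :=
      sq_le_sq' (by nlinarith) (by nlinarith)
    nlinarith [sq_nonneg ((shiftedJacobi α n).eval s)]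
  have hW : liouvilleDeriv α n s ^ 2 ≤ (8 * α + 18) * ((α + 1) ^ 2 / 4) := by
    refine add_sq_le.trans ?_
    linarith
  have hWD : (liouvillePotential α n s)⁻¹ * liouvilleDeriv α n s ^ 2 ≤ 8 * α + 18 := by
    rw [inv_mul_le_iff₀ (lt_of_lt_of_le (by positivity) hD), mul_comm]
    exact hW.trans (by gcongr)
  linarith

lemma liouvilleWeight_sq (hs₀ : 0 ≤ s) (hs₁ : s ≤ 1) :
    liouvilleWeight α s ^ 2 = s ^ (α + 1 / 2) * √(1 - s) := by
  rw [liouvilleWeight, mul_pow, ← rpow_mul_natCast hs₀, ← rpow_mul_natCast (sub_nonneg.2 hs₁),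
    sqrt_eq_rpow]
  congr 2 <;> push_cast <;> ring

/-- The energy of the Liouville normal form decreases from `s₀ = (α + 1)² / n²`. -/
lemma shiftedJacobi_sq_le_of_le (hα : 1 / 2 ≤ α) (hn : n ≠ 0) (hs₀ : n ^ 2 * s₀ = (α + 1) ^ 2)
    (hs₀' : s₀ ≤ 1 / 2) (hs : s ∈ Set.Ico s₀ 1) :
    s ^ (α + 1 / 2) * √(1 - s) * (shiftedJacobi α n).eval s ^ 2
      ≤ (8 * α + 19) * s₀ ^ (α + 1 / 2) := by
  have hpos : 0 < s₀ := pos_of_mul_pos_right (hs₀ ▸ by positivity) (sq_nonneg (n : ℝ))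
  have hspos : 0 < s := hpos.trans_le hs.1
  have hD : 0 ≤ liouvillePotential α n s :=
    le_trans (mul_nonneg (sub_nonneg.2 hs.2.le) (by positivity)) (le_liouvillePotential
      (by linarith) (hs₀.ge.trans (by gcongr; exact hs.1)) hspos hs.2)
  calc s ^ (α + 1 / 2) * √(1 - s) * (shiftedJacobi α n).eval s ^ 2
      = (liouvilleWeight α s * (shiftedJacobi α n).eval s) ^ 2 := by
        rw [mul_pow, liouvilleWeight_sq hspos.le hs.2.le]
    _ ≤ _ := le_add_of_nonneg_right (b := (liouvillePotential α n s)⁻¹ *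
          (liouvilleWeight α s * liouvilleDeriv α n s) ^ 2) (by positivity)
    _ ≤ _ := antitoneOn_liouville_energy hα hpos hs₀.ge ⟨le_rfl, by linarith⟩ hs hs.1
    _ = liouvilleWeight α s₀ ^ 2 * ((shiftedJacobi α n).eval s₀ ^ 2
        + (liouvillePotential α n s₀)⁻¹ * liouvilleDeriv α n s₀ ^ 2) := by ring
    _ ≤ liouvilleWeight α s₀ ^ 2 * (8 * α + 19) :=
        mul_le_mul_of_nonneg_left (liouville_energy_le (by linarith) hn hs₀ hs₀') (sq_nonneg _)
    _ ≤ (8 * α + 19) * s₀ ^ (α + 1 / 2) := by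
        rw [liouvilleWeight_sq hpos.le (by linarith), mul_comm]
        gcongr
        exact mul_le_of_le_one_right (by positivity) (sqrt_le_one.2 (by linarith))

lemma rpow_mul_shiftedJacobi_sq_le (hα : 1 / 2 ≤ α) (hn : 2 * (α + 1) ^ 2 ≤ n ^ 2)
    (hs : α + 1 ≤ n * √s) (hs₁ : s < 1) :
    (n * √s) ^ (2 * α + 1) * √(1 - s) * (shiftedJacobi α n).eval s ^ 2
      ≤ (8 * α + 19) * (α + 1) ^ (2 * α + 1) := by
  have hn_sq : (0 : ℝ) < (n : ℝ) ^ 2 := lt_of_lt_of_le (by positivity) hn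
  have hs_pos : 0 < s := sqrt_pos.1 (pos_of_mul_pos_right (by linarith) n.cast_nonneg)
  have h_sq : ((n : ℝ) * √s) ^ 2 = n ^ 2 * s := by rw [mul_pow, sq_sqrt hs_pos.le]
  have h_rpow (x : ℝ) (hx : 0 ≤ x) : x ^ (2 * α + 1) = (x ^ 2) ^ (α + 1 / 2) := by
    rw [← rpow_natCast_mul hx]
    push_cast
    ring_nf
  set s₀ := (α + 1) ^ 2 / (n : ℝ) ^ 2 with hs₀
  have hns₀ : (n : ℝ) ^ 2 * s₀ = (α + 1) ^ 2 := mul_div_cancel₀ _ hn_sq.ne'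
  have hs₀s : s₀ ≤ s := by
    rw [hs₀, div_le_iff₀ hn_sq, mul_comm, ← h_sq]
    gcongr
  have h := shiftedJacobi_sq_le_of_le hα (by rintro rfl; simp at hn_sq) hns₀
    ((div_le_iff₀ hn_sq).2 (by linarith)) ⟨hs₀s, hs₁⟩
  rw [h_rpow _ (by positivity), h_rpow _ (by positivity), h_sq, ← hns₀, mul_rpow hn_sq.le hs_pos.le,
    mul_rpow hn_sq.le (by positivity)]
  linarith [mul_le_mul_of_nonneg_left h (rpow_nonneg hn_sq.le (α + 1 / 2))]

lemma one_add_rpow_mul_shiftedJacobi_sq_le_of_mul_sqrt_le (hα : 0 < α)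
    (hn : 2 * (α + 1) ^ 2 ≤ n ^ 2) (hs₀ : 0 ≤ s) (hs : n * √s ≤ α + 1) :
    (1 + n * √s) ^ (2 * α + 1) * (shiftedJacobi α n).eval s ^ 2 ≤ (α + 2) ^ (2 * α + 1) := by
  have hn_sq : (0 : ℝ) < (n : ℝ) ^ 2 := lt_of_lt_of_le (by positivity) hn
  have h_sq : (n : ℝ) ^ 2 * s ≤ (α + 1) ^ 2 := by
    rw [← sq_sqrt hs₀, ← mul_pow]
    gcongr
  have hp := shiftedJacobi_sq_le_one hα (n := n) (by rintro rfl; simp at hn_sq)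
    ⟨hs₀, by nlinarith⟩
  have h_rpow : (1 + n * √s) ^ (2 * α + 1) ≤ (α + 2) ^ (2 * α + 1) :=
    rpow_le_rpow (by positivity) (by linarith) (by linarith)
  exact (mul_le_of_le_one_right (by positivity) hp).trans h_rpow

lemma one_add_rpow_mul_shiftedJacobi_sq_le_of_le_mul_sqrt (hα : 1 / 2 ≤ α)
    (hn : 2 * (α + 1) ^ 2 ≤ n ^ 2) (hs : α + 1 ≤ n * √s) (hs₁ : s < 1) :
    (1 + n * √s) ^ (2 * α + 1) * √(1 - s) * (shiftedJacobi α n).eval s ^ 2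
      ≤ (α + 2) ^ (2 * α + 1) * (8 * α + 19) := by
  have h_rpow : (1 + n * √s) ^ (2 * α + 1) * (α + 1) ^ (2 * α + 1)
      ≤ (α + 2) ^ (2 * α + 1) * (n * √s) ^ (2 * α + 1) := by
    rw [← mul_rpow (by positivity) (by linarith), ← mul_rpow (by linarith) (by positivity)]
    exact rpow_le_rpow (by nlinarith) (by nlinarith) (by linarith)
  refine le_of_mul_le_mul_right ?_ (rpow_pos_of_pos (by linarith : 0 < α + 1) (2 * α + 1))
  calc (1 + n * √s) ^ (2 * α + 1) * √(1 - s) * (shiftedJacobi α n).eval s ^ 2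
        * (α + 1) ^ (2 * α + 1)
      = (1 + n * √s) ^ (2 * α + 1) * (α + 1) ^ (2 * α + 1)
        * (√(1 - s) * (shiftedJacobi α n).eval s ^ 2) := by ring
    _ ≤ (α + 2) ^ (2 * α + 1) * (n * √s) ^ (2 * α + 1)
        * (√(1 - s) * (shiftedJacobi α n).eval s ^ 2) :=
      mul_le_mul_of_nonneg_right h_rpow (by positivity)
    _ = (α + 2) ^ (2 * α + 1)
        * ((n * √s) ^ (2 * α + 1) * √(1 - s) * (shiftedJacobi α n).eval s ^ 2) := by ring
    _ ≤ (α + 2) ^ (2 * α + 1) * ((8 * α + 19) * (α + 1) ^ (2 * α + 1)) :=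
      mul_le_mul_of_nonneg_left (rpow_mul_shiftedJacobi_sq_le hα hn hs hs₁) (by positivity)
    _ = _ := by ring

lemma exists_forall_shiftedJacobi_sq_le (hα : 1 / 2 ≤ α) {δ : ℝ} (hδ : 0 < δ) :
    ∃ C, ∀ᶠ n : ℕ in atTop, ∀ s ∈ Set.Icc 0 (1 - δ),
      (1 + n * √s) ^ (2 * α + 1) * (shiftedJacobi α n).eval s ^ 2 ≤ C := by
  have h_large : ∀ᶠ n : ℕ in atTop, 2 * (α + 1) ^ 2 ≤ (n : ℝ) ^ 2 :=
    ((tendsto_pow_atTop two_ne_zero).comp tendsto_natCast_atTop_atTop).eventually_ge_atTop _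
  refine ⟨max ((α + 2) ^ (2 * α + 1)) ((α + 2) ^ (2 * α + 1) * (8 * α + 19) / √δ), ?_⟩
  filter_upwards [h_large] with n hn s hs
  rcases le_total (n * √s) (α + 1) with h_near | h_far
  · exact le_max_of_le_left
      (one_add_rpow_mul_shiftedJacobi_sq_le_of_mul_sqrt_le (by linarith) hn hs.1 h_near)
  · refine le_max_of_le_right ((le_div_iff₀ (sqrt_pos.2 hδ)).2 (le_trans ?_
      (one_add_rpow_mul_shiftedJacobi_sq_le_of_le_mul_sqrt hα hn h_far (by linarith [hs.2]))))
    rw [mul_right_comm]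
    gcongr
    linarith [hs.2]

end Sonin

/-! ### Mehler–Heine asymptotics -/

section MehlerHeine

/-- The entire function `Γ(α + 1) z ^ (-α / 2) J_α(2 √z)`, normalized to be `1` at `z = 0`. -/
def normalizedBessel (α z : ℝ) : ℝ :=
  ∑' k : ℕ, Gamma (α + 1) * (-z) ^ k / (k.factorial * Gamma (α + 1 + k))

variable {α : ℝ}

lemma prod_range_add_natCast_eq_Gamma_div {x : ℝ} (hx : 0 < x) (k : ℕ) :
    ∏ j ∈ Finset.range k, (x + j) = Gamma (x + k) / Gamma x := by
  induction k with
  | zero => simp [(Gamma_pos_of_pos hx).ne']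
  | succ k ih =>
    rw [Finset.prod_range_succ, ih, Nat.cast_succ, ← add_assoc, Gamma_add_one (by positivity)]
    ring

lemma prod_range_neg_div_eq (hα : 0 ≤ α) (z : ℝ) (k : ℕ) :
    ∏ j ∈ Finset.range k, (-z / ((j + 1) * (α + 1 + j))) =
      Gamma (α + 1) * (-z) ^ k / (k.factorial * Gamma (α + 1 + k)) := by
  rw [Finset.prod_div_distrib, Finset.prod_mul_distrib, Finset.prod_const, Finset.card_range,
    prod_range_add_natCast_eq_Gamma_div (by positivity), ← Finset.prod_range_add_one_eq_factorial]
  push_cast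
  rw [mul_div_assoc', div_div_eq_mul_div, mul_comm]

lemma jacobiCoeff_mul_pow (α ν s : ℝ) (k : ℕ) : jacobiCoeff α ν k * s ^ k =
    ∏ j ∈ Finset.range k, (-((ν - j) * (ν + α + 1 + j) * s) / ((j + 1) * (α + 1 + j))) := by
  rw [jacobiCoeff, Finset.pow_eq_prod_const, ← Finset.prod_mul_distrib]
  exact Finset.prod_congr rfl fun j _ ↦ by ring

lemma hasSum_shiftedJacobi (α : ℝ) (n : ℕ) (s : ℝ) :
    HasSum (fun k ↦ jacobiCoeff α n k * s ^ k) ((shiftedJacobi α n).eval s) := by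
  rw [eval_shiftedJacobi]
  refine hasSum_sum_of_ne_finset_zero fun k hk ↦ ?_
  rw [jacobiCoeff_eq_zero_of_lt α (by simpa using hk), zero_mul]

lemma abs_jacobiCoeff_mul_pow_le (hα : 0 ≤ α) {n : ℕ} {s M : ℝ} (hs : 0 ≤ s)
    (hM : n ^ 2 * s ≤ M) (k : ℕ) :
    |jacobiCoeff α n k * s ^ k| ≤ (2 * M) ^ k / k.factorial := by
  have hM₀ : 0 ≤ M := le_trans (by positivity) hM
  rcases lt_or_ge n k with h | h
  · rw [jacobiCoeff_eq_zero_of_lt α h, zero_mul, abs_zero]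
    positivity
  rw [jacobiCoeff_mul_pow, ← Finset.prod_range_add_one_eq_factorial, Finset.abs_prod,
    Finset.pow_eq_prod_const, Nat.cast_prod, ← Finset.prod_div_distrib]
  refine Finset.prod_le_prod (fun _ _ ↦ abs_nonneg _) fun j hj ↦ ?_
  have hjn : (j : ℝ) + 1 ≤ n := mod_cast (Finset.mem_range.1 hj).trans_le h
  have hj₀ : (0 : ℝ) ≤ j := j.cast_nonneg
  rw [abs_div, abs_neg, abs_mul, abs_mul, abs_of_nonneg (by linarith : 0 ≤ (n : ℝ) - j),
    abs_of_nonneg (by positivity : 0 ≤ (n : ℝ) + α + 1 + j), abs_of_nonneg hs,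
    abs_of_pos (by positivity : 0 < ((j : ℝ) + 1) * (α + 1 + j)),
    div_le_div_iff₀ (by positivity) (by positivity)]
  push_cast
  calc ((n : ℝ) - j) * (n + α + 1 + j) * s * (j + 1)
      ≤ n * (2 * n * (α + 1 + j)) * s * (j + 1) := by
        gcongr
        · linarith
        · nlinarith [hj₀]
    _ = 2 * (n ^ 2 * s) * ((j + 1) * (α + 1 + j)) := by ring
    _ ≤ 2 * M * ((j + 1) * (α + 1 + j)) := by gcongr

variable {ι : Type*} {l : Filter ι} {n : ι → ℕ} {s : ι → ℝ} {z : ℝ}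

lemma tendsto_jacobiCoeff_mul_pow (hα : 0 ≤ α) (hn : Tendsto n l atTop)
    (hz : Tendsto (fun i ↦ (n i : ℝ) ^ 2 * s i) l (𝓝 z)) (k : ℕ) :
    Tendsto (fun i ↦ jacobiCoeff α (n i) k * s i ^ k) l
      (𝓝 (Gamma (α + 1) * (-z) ^ k / (k.factorial * Gamma (α + 1 + k)))) := by
  simp only [jacobiCoeff_mul_pow, ← prod_range_neg_div_eq hα]
  refine tendsto_finsetProd _ fun j _ ↦ (Tendsto.neg ?_).div_const _
  have h_inv : Tendsto (fun i ↦ (n i : ℝ)⁻¹) l (𝓝 0) :=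
    tendsto_inv_atTop_zero.comp (tendsto_natCast_atTop_atTop.comp hn)
  have h := ((tendsto_const_nhds (x := (1 : ℝ))).sub (h_inv.const_mul (j : ℝ))).mul
    ((tendsto_const_nhds (x := (1 : ℝ))).add (h_inv.const_mul (α + 1 + j))) |>.mul hz
  rw [mul_zero, mul_zero, sub_zero, add_zero, one_mul, one_mul] at h
  refine h.congr' ?_
  filter_upwards [hn.eventually_ne_atTop 0] with i hi
  field_simp
  ring

theorem tendsto_eval_shiftedJacobi (hα : 0 ≤ α) (hn : Tendsto n l atTop) (hs : ∀ᶠ i in l, 0 ≤ s i)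
    (hz : Tendsto (fun i ↦ (n i : ℝ) ^ 2 * s i) l (𝓝 z)) :
    Tendsto (fun i ↦ (shiftedJacobi α (n i)).eval (s i)) l (𝓝 (normalizedBessel α z)) := by
  simp only [← (hasSum_shiftedJacobi α _ _).tsum_eq, normalizedBessel]
  refine tendsto_tsum_of_dominated_convergence (Real.summable_pow_div_factorial (2 * (z + 1)))
    (tendsto_jacobiCoeff_mul_pow hα hn hz) ?_
  filter_upwards [hs, hz.eventually_le_const (lt_add_one z)] with i hsi hzi
  exact abs_jacobiCoeff_mul_pow_le hα hsi hzi

end MehlerHeine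

/-! ### Fourier analysis of finitely supported functions on `ℤ ^ d` -/

section LatticeFourier

open AddMonoidAlgebra
open scoped Polynomial

variable {d : ℕ}

/-- The character `v ↦ exp (i ⟨ξ, v⟩)` of `ℤ ^ d`. -/
def latticeChar (ξ : Fin d → ℝ) : Multiplicative (Fin d → ℤ) →* ℂ where
  toFun v := Complex.exp (Complex.I * ((∑ i, ξ i * (v.toAdd i : ℝ) : ℝ) : ℂ))
  map_one' := by simp
  map_mul' v w := by simp [← Complex.exp_add, mul_add, Finset.sum_add_distrib]

lemma latticeChar_ofAdd (ξ : Fin d → ℝ) (v : Fin d → ℤ) :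
    latticeChar ξ (.ofAdd v) = Complex.exp (Complex.I * ((∑ i, ξ i * (v i : ℝ) : ℝ) : ℂ)) :=
  rfl

lemma tsum_coeff_mul {𝕜 : Type*} [RCLike 𝕜] (a : ℝ[Fin d → ℤ]) (g : (Fin d → ℤ) → 𝕜) :
    ∑' v, (a.coeff v : 𝕜) * g v = ∑ v ∈ a.coeff.support, (a.coeff v : 𝕜) * g v :=
  tsum_eq_sum fun v hv ↦ by simp [Finsupp.notMem_support_iff.1 hv]

lemma ftOmega_coeff (a : ℝ[Fin d → ℤ]) (ξ : Fin d → ℝ) :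
    ftOmega a.coeff ξ = lift ℝ ℂ (Fin d → ℤ) (latticeChar ξ) a := by
  simp only [ftOmega, lift_apply, Finsupp.sum, Complex.real_smul, ← latticeChar_ofAdd]
  exact tsum_coeff_mul a fun v ↦ latticeChar ξ (.ofAdd v)

lemma latticeConv_coeff (a b : ℝ[Fin d → ℤ]) :
    latticeConv a.coeff b.coeff = (a * b).coeff := by
  ext v
  rw [mul_comm, coeff_mul, Finsupp.sum, latticeConv]
  rw [tsum_eq_sum (s := b.coeff.support) fun w hw ↦ by simp [Finsupp.notMem_support_iff.1 hw]]
  refine Finset.sum_congr rfl fun w _ ↦ ?_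
  simp only [← eq_sub_iff_add_eq', Finsupp.sum, Finset.sum_ite_eq', Finsupp.mem_support_iff]
  rw [ite_eq_left_iff.2 fun h ↦ by rw [not_not.1 h, mul_zero], mul_comm]

/-- The `n`-th Jacobi iterate of the weight `a`, as an element of the group algebra. -/
def jacobiKernel (a : ℝ[Fin d → ℤ]) (n : ℕ) : ℝ[Fin d → ℤ] :=
  Polynomial.aeval ((1 / 2 : ℝ) • (1 - a)) (shiftedJacobi (d / 2) n)

theorem jacobi_iteration_eq_jacobiKernel (hd : 1 ≤ d) (a : ℝ[Fin d → ℤ])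
    (x : ℕ → (Fin d → ℤ) → ℝ) (hx0 : ∀ v, x 0 v = if v = 0 then 1 else 0)
    (hx1 : ∀ v, x 1 v = aCoef0 d * latticeConv a.coeff (x 0) v + bCoef0 d * x 0 v)
    (hrec : ∀ n, 1 ≤ n → ∀ v, x (n + 1) v =
      aCoef d n * latticeConv a.coeff (x n) v + bCoef d n * x n v - cCoef d n * x (n - 1) v)
    (n : ℕ) : x n = (jacobiKernel a n).coeff := by
  have h0 : x 0 = (1 : ℝ[Fin d → ℤ]).coeff := by
    ext v
    simp [hx0, one_def, Finsupp.single_apply, eq_comm]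
  induction n using Nat.twoStepInduction with
  | zero => simp [jacobiKernel, shiftedJacobi_zero, h0]
  | one =>
    ext v
    rw [hx1, h0, latticeConv_coeff, jacobiKernel, shiftedJacobi_one]
    simp [Algebra.algebraMap_eq_smul_one]
  | more n ih ih' =>
    ext v
    rw [hrec (n + 1) (by simp), ih', Nat.add_sub_cancel, ih, latticeConv_coeff]
    simp only [jacobiKernel]
    rw [shiftedJacobi_add_two hd]
    simp [Algebra.algebraMap_eq_smul_one]

section Support

variable {G : Type*} [AddCommGroup G] [PartialOrder G] [IsOrderedAddMonoid G] {a : ℝ[G]} {r : G}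

lemma mem_Icc_of_coeff_pow_ne_zero (ha : ∀ v, a.coeff v ≠ 0 → v ∈ Set.Icc (-r) r) (n : ℕ) :
    ∀ v, (a ^ n).coeff v ≠ 0 → v ∈ Set.Icc (-(n • r)) (n • r) := by
  classical
  induction n with
  | zero => simp +contextual [one_def, Finsupp.single_apply]
  | succ n ih =>
    intro v hv
    rw [pow_succ] at hv
    obtain ⟨u, hu, w, hw, rfl⟩ := Finset.mem_add.1
      (support_coeff_mul_subset _ _ (Finsupp.mem_support_iff.2 hv))
    obtain ⟨hu₁, hu₂⟩ := ih u (Finsupp.mem_support_iff.1 hu)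
    obtain ⟨hw₁, hw₂⟩ := ha w (Finsupp.mem_support_iff.1 hw)
    rw [succ_nsmul, neg_add]
    exact ⟨add_le_add hu₁ hw₁, add_le_add hu₂ hw₂⟩

lemma mem_Icc_of_coeff_aeval_ne_zero (hr : 0 ≤ r)
    (ha : ∀ v, a.coeff v ≠ 0 → v ∈ Set.Icc (-r) r) {p : ℝ[X]} {n : ℕ} (hp : p.natDegree ≤ n) {v : G}
    (hv : (Polynomial.aeval a p).coeff v ≠ 0) : v ∈ Set.Icc (-(n • r)) (n • r) := by
  rw [Polynomial.aeval_eq_sum_range, coeff_sum, Finsupp.finsetSum_apply] at hv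
  obtain ⟨k, hk, hkv⟩ := Finset.exists_ne_zero_of_sum_ne_zero hv
  obtain ⟨h₁, h₂⟩ := mem_Icc_of_coeff_pow_ne_zero ha k v fun h ↦ hkv (by simp [h])
  have hkn : k • r ≤ n • r := nsmul_le_nsmul_left hr (by simp at hk; lia)
  exact ⟨(neg_le_neg hkn).trans h₁, h₂.trans hkn⟩

end Support

lemma mem_Icc_of_coeff_jacobiKernel_ne_zero {a : ℝ[Fin d → ℤ]} {r : Fin d → ℤ} (hr : 0 ≤ r)
    (ha : ∀ v ∈ a.coeff.support, v ∈ Set.Icc (-r) r) {n : ℕ} {v : Fin d → ℤ}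
    (hv : (jacobiKernel a n).coeff v ≠ 0) : v ∈ Set.Icc (-(n • r)) (n • r) := by
  refine mem_Icc_of_coeff_aeval_ne_zero hr (fun w hw ↦ ?_) (natDegree_shiftedJacobi_le _ n) hv
  obtain rfl | hw₀ := eq_or_ne w 0
  · exact ⟨neg_nonpos.2 hr, hr⟩
  · refine ha w (Finsupp.mem_support_iff.2 fun h ↦ hw ?_)
    simp [one_def, hw₀.symm, h]

lemma exists_nonneg_forall_mem_Icc (s : Finset (Fin d → ℤ)) :
    ∃ r : Fin d → ℤ, 0 ≤ r ∧ ∀ v ∈ s, v ∈ Set.Icc (-r) r := by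
  refine ⟨∑ v ∈ s, |v|, Finset.sum_nonneg fun v _ ↦ abs_nonneg v, fun v hv ↦ ?_⟩
  have hle : |v| ≤ ∑ v ∈ s, |v| := Finset.single_le_sum (fun v _ ↦ abs_nonneg v) hv
  exact ⟨neg_le.1 ((neg_le_abs v).trans hle), (le_abs_self v).trans hle⟩

lemma card_Icc_nsmul_le {r : Fin d → ℤ} (hr : 0 ≤ r) {n : ℕ} (hn : 1 ≤ n) :
    ((Finset.Icc (-(n • r)) (n • r)).card : ℝ) ≤ (∏ i, (2 * r i + 1) : ℤ) * n ^ d := by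
  have hcard (i : Fin d) : ((Finset.Icc (-(n • r i)) (n • r i)).card : ℝ) = 2 * (n * r i) + 1 := by
    have : 0 ≤ n * r i := mul_nonneg n.cast_nonneg (hr i)
    rw [Int.card_Icc, nsmul_eq_mul, ← Int.cast_natCast, Int.toNat_of_nonneg (by lia)]
    push_cast
    ring
  calc ((Finset.Icc (-(n • r)) (n • r)).card : ℝ)
      = ∏ i, (2 * (n * r i) + 1 : ℝ) := by
        rw [Pi.card_Icc, Nat.cast_prod]
        exact Finset.prod_congr rfl fun i _ ↦ hcard i
    _ ≤ ∏ i, ((2 * r i + 1) * n : ℝ) := by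
        have hr' (i : Fin d) : (0 : ℝ) ≤ r i := Int.cast_nonneg (hr i)
        have hn' : (1 : ℝ) ≤ n := Nat.one_le_cast.2 hn
        exact Finset.prod_le_prod (fun i _ ↦ by have := hr' i; positivity) fun i _ ↦ by linarith
    _ = (∏ i, (2 * r i + 1) : ℤ) * n ^ d := by
        push_cast
        rw [Finset.prod_mul_distrib, Fin.prod_const]

/-! ### Parseval's identity -/

lemma setIntegral_exp_int_mul_eq_ite (m : ℤ) :
    ∫ t in Set.Icc (-π) π, Complex.exp (Complex.I * ((t * m : ℝ) : ℂ)) =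
      if m = 0 then 2 * (π : ℂ) else 0 := by
  rw [integral_Icc_eq_integral_Ioc, ← intervalIntegral.integral_of_le (by linarith [pi_pos])]
  split_ifs with hm
  · simp [hm, two_mul]
  · have hc : Complex.I * m ≠ 0 := mul_ne_zero Complex.I_ne_zero (Int.cast_ne_zero.2 hm)
    have hper : Complex.exp (Complex.I * m * π) = Complex.exp (Complex.I * m * (-π : ℝ)) :=
      Complex.exp_eq_exp_iff_exists_int.2 ⟨m, by push_cast; ring⟩
    calc ∫ t in (-π)..π, Complex.exp (Complex.I * ((t * m : ℝ) : ℂ))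
        = ∫ t in (-π)..π, Complex.exp (Complex.I * m * t) := by
          congr! 3 with t
          push_cast
          ring
      _ = 0 := by rw [integral_exp_mul_complex hc, hper, sub_self, zero_div]

lemma setIntegral_latticeChar (v : Fin d → ℤ) :
    ∫ ξ in Set.Icc (fun _ : Fin d ↦ -π) (fun _ ↦ π), latticeChar ξ (.ofAdd v) =
      if v = 0 then (2 * (π : ℂ)) ^ d else 0 := by
  have hprod (ξ : Fin d → ℝ) : latticeChar ξ (.ofAdd v) =
      ∏ i, Complex.exp (Complex.I * ((ξ i * v i : ℝ) : ℂ)) := by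
    rw [latticeChar_ofAdd, ← Complex.exp_sum, ← Finset.mul_sum, Complex.ofReal_sum]
  simp only [hprod]
  rw [← Set.pi_univ_Icc, volume_pi, Measure.restrict_pi_pi,
    integral_fintype_prod_eq_prod fun i t ↦ Complex.exp (Complex.I * ((t * v i : ℝ) : ℂ))]
  simp only [setIntegral_exp_int_mul_eq_ite]
  split_ifs with hv
  · simp [hv]
  · obtain ⟨i, hi⟩ := Function.ne_iff.1 hv
    exact Finset.prod_eq_zero (Finset.mem_univ i) (if_neg hi)

lemma continuous_latticeChar (v : Multiplicative (Fin d → ℤ)) :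
    Continuous fun ξ ↦ latticeChar ξ v := by
  simp only [latticeChar, MonoidHom.coe_mk, OneHom.coe_mk]
  fun_prop

lemma conj_latticeChar (ξ : Fin d → ℝ) (v : Multiplicative (Fin d → ℤ)) :
    starRingEnd ℂ (latticeChar ξ v) = latticeChar ξ v⁻¹ := by
  simp [latticeChar, ← Complex.exp_conj]

theorem setIntegral_normSq_ftOmega (a : ℝ[Fin d → ℤ]) :
    ∫ ξ in Set.Icc (fun _ : Fin d ↦ -π) (fun _ ↦ π), Complex.normSq (ftOmega a.coeff ξ) =
      (2 * π) ^ d * ∑ v ∈ a.coeff.support, a.coeff v ^ 2 := by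
  have hsq (ξ : Fin d → ℝ) : (Complex.normSq (ftOmega a.coeff ξ) : ℂ) =
      ∑ v ∈ a.coeff.support, ∑ w ∈ a.coeff.support,
        (a.coeff v * a.coeff w : ℂ) * latticeChar ξ (.ofAdd (v - w)) := by
    rw [← Complex.mul_conj, ftOmega_coeff, lift_apply, Finsupp.sum, map_sum, Finset.sum_mul_sum]
    congr! 2 with v _ w _
    rw [Complex.real_smul, Complex.real_smul, map_mul, conj_latticeChar, sub_eq_add_neg, ofAdd_add,
      ofAdd_neg, map_mul, Complex.conj_ofReal]
    ring
  have hint (v : Fin d → ℤ) (c : ℂ) : IntegrableOn (fun ξ ↦ c * latticeChar ξ (.ofAdd v))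
      (Set.Icc (fun _ : Fin d ↦ -π) (fun _ ↦ π)) :=
    ((continuous_latticeChar _).const_mul c).continuousOn.integrableOn_compact isCompact_Icc
  apply Complex.ofReal_injective
  rw [← integral_complex_ofReal]
  simp only [hsq]
  rw [integral_finsetSum _ fun v _ ↦ integrable_finsetSum _ fun w _ ↦ hint _ _]
  simp only [integral_finsetSum _ fun w _ ↦ hint (_ - w) _, integral_const_mul,
    setIntegral_latticeChar, sub_eq_zero, mul_ite, mul_zero, Finset.sum_ite_eq]
  push_cast
  rw [Finset.mul_sum]
  refine Finset.sum_congr rfl fun v hv ↦ ?_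
  rw [if_pos hv]
  ring

end LatticeFourier

/-! ### The symbol of the random walk -/

section SineSymbol

open AddMonoidAlgebra

variable {d : ℕ}

/-- The function `(1 - ω̂) / 2` for a symmetric probability weight `ω`, at which the Jacobi
polynomials are evaluated. -/
def sineSymbol (ω : (Fin d → ℤ) → ℝ) (ξ : Fin d → ℝ) : ℝ :=
  ∑' v, ω v * sin ((∑ i, ξ i * (v i : ℝ)) / 2) ^ 2

variable {a : ℝ[Fin d → ℤ]}

lemma sineSymbol_coeff (a : ℝ[Fin d → ℤ]) (ξ : Fin d → ℝ) : sineSymbol a.coeff ξ =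
    ∑ v ∈ a.coeff.support, a.coeff v * sin ((∑ i, ξ i * (v i : ℝ)) / 2) ^ 2 :=
  tsum_coeff_mul a fun v ↦ sin ((∑ i, ξ i * (v i : ℝ)) / 2) ^ 2

lemma conj_ftOmega (hsymm : ∀ v, a.coeff (-v) = a.coeff v) (ξ : Fin d → ℝ) :
    starRingEnd ℂ (ftOmega a.coeff ξ) = ftOmega a.coeff ξ := by
  rw [ftOmega, RCLike.conj_tsum, ← (Equiv.neg _).tsum_eq]
  refine tsum_congr fun v ↦ ?_
  rw [map_mul, Complex.conj_ofReal, ← latticeChar_ofAdd, ← latticeChar_ofAdd, conj_latticeChar]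
  simp [hsymm]

theorem ftOmega_eq_one_sub_sineSymbol (hmass : ∑' v, a.coeff v = 1)
    (hsymm : ∀ v, a.coeff (-v) = a.coeff v) (ξ : Fin d → ℝ) :
    ftOmega a.coeff ξ = ((1 - 2 * sineSymbol a.coeff ξ : ℝ) : ℂ) := by
  have hmass' : ∑ v ∈ a.coeff.support, a.coeff v = 1 := by
    simpa using (tsum_coeff_mul a fun _ ↦ (1 : ℝ)).symm.trans (by simpa using hmass)
  rw [← Complex.conj_eq_iff_re.1 (conj_ftOmega hsymm ξ), Complex.ofReal_inj, ftOmega_coeff,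
    lift_apply, Finsupp.sum, Complex.re_sum, sineSymbol_coeff, ← hmass', Finset.mul_sum,
    ← Finset.sum_sub_distrib]
  refine Finset.sum_congr rfl fun v _ ↦ ?_
  rw [Complex.real_smul, Complex.re_ofReal_mul, latticeChar_ofAdd, mul_comm Complex.I,
    Complex.exp_ofReal_mul_I_re, sin_sq_eq_half_sub, mul_div_cancel₀ _ two_ne_zero]
  ring

lemma dotProduct_covQ_mulVec (a : ℝ[Fin d → ℤ]) (ξ : Fin d → ℝ) : ξ ⬝ᵥ (covQ d a.coeff *ᵥ ξ) =
    ∑ v ∈ a.coeff.support, a.coeff v * (∑ i, ξ i * (v i : ℝ)) ^ 2 := by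
  have hcov (i j : Fin d) :
      covQ d a.coeff i j = ∑ v ∈ a.coeff.support, a.coeff v * ((v i : ℝ) * (v j : ℝ)) := by
    simp only [covQ, of_apply, mul_assoc]
    exact tsum_coeff_mul a fun v ↦ (v i : ℝ) * (v j : ℝ)
  simp only [dotProduct, mulVec, hcov, sq, Finset.sum_mul, Finset.mul_sum]
  rw [Finset.sum_comm (s := a.coeff.support)]
  refine Finset.sum_congr rfl fun i _ ↦ ?_
  rw [Finset.sum_comm]
  exact Finset.sum_congr rfl fun v _ ↦ Finset.sum_congr rfl fun j _ ↦ by ring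

lemma continuous_sineSymbol (a : ℝ[Fin d → ℤ]) : Continuous (sineSymbol a.coeff) := by
  simp only [funext (sineSymbol_coeff a)]
  fun_prop

lemma sineSymbol_nonneg (hnn : ∀ v, 0 ≤ a.coeff v) (ξ : Fin d → ℝ) : 0 ≤ sineSymbol a.coeff ξ :=
  tsum_nonneg fun v ↦ mul_nonneg (hnn v) (sq_nonneg _)

lemma tendsto_sineSymbol_smul_div_sq (a : ℝ[Fin d → ℤ]) (ξ : Fin d → ℝ) :
    Tendsto (fun ε ↦ sineSymbol a.coeff (ε • ξ) / ε ^ 2) (𝓝[≠] 0)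
      (𝓝 ((ξ ⬝ᵥ (covQ d a.coeff *ᵥ ξ)) / 4)) := by
  have hsin (u : ℝ) : Tendsto (fun ε ↦ sin (ε * u / 2) / ε) (𝓝[≠] 0) (𝓝 (u / 2)) := by
    have hderiv : HasDerivAt (fun ε ↦ sin (ε * u / 2)) (u / 2) 0 := by
      simpa using (((hasDerivAt_id (0 : ℝ)).mul_const u).div_const 2).sin
    simpa [slope_fun_def_field] using hasDerivAt_iff_tendsto_slope.1 hderiv
  have hsum : Tendsto (fun ε ↦ ∑ v ∈ a.coeff.support,
      a.coeff v * (sin (ε * (∑ i, ξ i * (v i : ℝ)) / 2) / ε) ^ 2) (𝓝[≠] 0)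
      (𝓝 (∑ v ∈ a.coeff.support, a.coeff v * ((∑ i, ξ i * (v i : ℝ)) / 2) ^ 2)) :=
    tendsto_finsetSum _ fun v _ ↦ ((hsin _).pow 2).const_mul _
  convert hsum using 2 with ε
  · simp only [sineSymbol_coeff, Pi.smul_apply, smul_eq_mul, Finset.sum_div, Finset.mul_sum,
      div_pow, mul_div_assoc, mul_assoc]
  · rw [dotProduct_covQ_mulVec, Finset.sum_div]
    exact Finset.sum_congr rfl fun v _ ↦ by ring

lemma sq_le_pi_sq_mul_sin_half_sq {u : ℝ} (hu : |u| ≤ π) : u ^ 2 ≤ π ^ 2 * sin (u / 2) ^ 2 := by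
  have hhalf : |u / 2| = |u| / 2 := by rw [abs_div, abs_two]
  have hle : 2 / π * |u / 2| ≤ |sin (u / 2)| := mul_abs_le_abs_sin (by linarith)
  have hle' : |u| ≤ |π * sin (u / 2)| := by
    rw [abs_mul, abs_of_pos pi_pos]
    calc |u| = π * (2 / π * |u / 2|) := by rw [hhalf]; field_simp
      _ ≤ π * |sin (u / 2)| := by gcongr
  simpa [mul_pow] using sq_le_sq.2 hle'

lemma exists_pos_forall_mul_norm_sq_le_of_isCompact {E : Type*} [NormedAddCommGroup E] {K : Set E}
    (hK : IsCompact K) {g : E → ℝ} (hg : Continuous g) (hpos : ∀ ξ ∈ K, ξ ≠ 0 → 0 < g ξ)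
    {c : ℝ} (hc : 0 < c) (hnear : ∀ᶠ ξ in 𝓝 0, c * ‖ξ‖ ^ 2 ≤ g ξ) :
    ∃ c > 0, ∀ ξ ∈ K, c * ‖ξ‖ ^ 2 ≤ g ξ := by
  obtain ⟨U, hU, hUo, h0⟩ := eventually_nhds_iff.1 hnear
  have h0' {ξ : E} (hξ : ξ ∈ K \ U) : ξ ≠ 0 := by
    rintro rfl
    exact hξ.2 h0
  have hne {ξ : E} (hξ : ξ ∈ K \ U) : 0 < ‖ξ‖ ^ 2 :=
    pow_pos (norm_pos_iff.2 (h0' hξ)) 2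
  obtain ⟨m, hm, hle⟩ := (hK.diff hUo).exists_forall_le' (f := fun ξ ↦ g ξ / ‖ξ‖ ^ 2)
    (hg.continuousOn.div (by fun_prop) fun ξ hξ ↦ (hne hξ).ne') (a := 0)
    fun ξ hξ ↦ div_pos (hpos ξ hξ.1 (h0' hξ)) (hne hξ)
  refine ⟨min c m, lt_min hc hm, fun ξ hξ ↦ ?_⟩
  by_cases hξU : ξ ∈ U
  · exact le_trans (by gcongr; exact min_le_left c m) (hU ξ hξU)
  · exact le_trans (by gcongr; exact min_le_right c m)
      ((le_div_iff₀ (hne ⟨hξ, hξU⟩)).1 (hle ξ ⟨hξ, hξU⟩))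

lemma exists_pos_forall_mul_norm_sq_le_dotProduct {Q : Matrix (Fin d) (Fin d) ℝ} (hQ : Q.PosDef) :
    ∃ c > 0, ∀ ξ : Fin d → ℝ, c * ‖ξ‖ ^ 2 ≤ ξ ⬝ᵥ (Q *ᵥ ξ) := by
  obtain ⟨c, hc, hle⟩ := (isCompact_sphere (0 : Fin d → ℝ) 1).exists_forall_le'
    (f := fun ξ ↦ ξ ⬝ᵥ (Q *ᵥ ξ)) (a := 0) (by fun_prop) fun ξ hξ ↦ by
      simpa using hQ.dotProduct_mulVec_pos (ne_zero_of_mem_unit_sphere ⟨ξ, hξ⟩)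
  refine ⟨c, hc, fun ξ ↦ ?_⟩
  obtain rfl | hξ := eq_or_ne ξ 0
  · simp
  have hn : 0 < ‖ξ‖ := norm_pos_iff.2 hξ
  have h := hle (‖ξ‖⁻¹ • ξ) (by simp [norm_smul, hn.ne'])
  simp only [mulVec_smul, dotProduct_smul, smul_dotProduct, smul_eq_mul] at h
  calc c * ‖ξ‖ ^ 2 ≤ ‖ξ‖⁻¹ * (‖ξ‖⁻¹ * (ξ ⬝ᵥ (Q *ᵥ ξ))) * ‖ξ‖ ^ 2 := by gcongr
    _ = ξ ⬝ᵥ (Q *ᵥ ξ) := by field_simp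

lemma sineSymbol_mem_Ioo (hmass : ∑' v, a.coeff v = 1) (hsymm : ∀ v, a.coeff (-v) = a.coeff v)
    {ξ : Fin d → ℝ} (hξ : ‖ftOmega a.coeff ξ‖ < 1) : sineSymbol a.coeff ξ ∈ Set.Ioo 0 1 := by
  rw [ftOmega_eq_one_sub_sineSymbol hmass hsymm, Complex.norm_real, norm_eq_abs, abs_lt] at hξ
  constructor <;> linarith [hξ.1, hξ.2]

lemma eventually_mul_norm_sq_le_sineSymbol (hnn : ∀ v, 0 ≤ a.coeff v)
    (hQ : (covQ d a.coeff).PosDef) :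
    ∃ c > 0, ∀ᶠ ξ in 𝓝 0, c * ‖ξ‖ ^ 2 ≤ sineSymbol a.coeff ξ := by
  obtain ⟨c, hc, hle⟩ := exists_pos_forall_mul_norm_sq_le_dotProduct hQ
  have hsmall : ∀ᶠ ξ : Fin d → ℝ in 𝓝 0, ∀ v ∈ a.coeff.support, |∑ i, ξ i * (v i : ℝ)| ≤ π := by
    refine (Finset.eventually_all _).2 fun v _ ↦ ?_
    have hcont : Continuous fun ξ : Fin d → ℝ ↦ |∑ i, ξ i * (v i : ℝ)| := by fun_prop
    exact (hcont.tendsto' 0 0 (by simp)).eventually_le_const pi_pos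
  refine ⟨c / π ^ 2, by positivity, hsmall.mono fun ξ hξ ↦ ?_⟩
  rw [div_mul_eq_mul_div, div_le_iff₀' (by positivity)]
  refine (hle ξ).trans ?_
  rw [dotProduct_covQ_mulVec, sineSymbol_coeff, Finset.mul_sum]
  refine Finset.sum_le_sum fun v hv ↦ ?_
  rw [mul_left_comm]
  exact mul_le_mul_of_nonneg_left (sq_le_pi_sq_mul_sin_half_sq (hξ v hv)) (hnn v)

end SineSymbol

/-! ### Uniform summability of the iterates -/

section UniformSummability

open AddMonoidAlgebra

lemma setIntegral_le_of_le_one_add_norm_smul_rpow {E : Type*} [NormedAddCommGroup E]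
    [NormedSpace ℝ E] [FiniteDimensional ℝ E] [MeasurableSpace E] [BorelSpace E] (μ : Measure E)
    [μ.IsAddHaarMeasure] {r : ℝ} (hr : Module.finrank ℝ E < r) {K : Set E} (hK : MeasurableSet K)
    {f : E → ℝ} (hf : IntegrableOn f K μ) {C : ℝ} (hC : 0 ≤ C) {R : ℝ} (hR : 0 < R)
    (hle : ∀ ξ ∈ K, f ξ ≤ C * (1 + ‖R • ξ‖) ^ (-r)) :
    ∫ ξ in K, f ξ ∂μ ≤ C * (∫ ξ, (1 + ‖ξ‖) ^ (-r) ∂μ) / R ^ Module.finrank ℝ E := by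
  have hint : Integrable (fun ξ ↦ C * (1 + ‖R • ξ‖) ^ (-r)) μ :=
    ((integrable_one_add_norm hr).comp_smul hR.ne').const_mul C
  calc ∫ ξ in K, f ξ ∂μ ≤ ∫ ξ in K, C * (1 + ‖R • ξ‖) ^ (-r) ∂μ :=
        setIntegral_mono_on hf hint.integrableOn hK hle
    _ ≤ ∫ ξ, C * (1 + ‖R • ξ‖) ^ (-r) ∂μ :=
        setIntegral_le_integral hint (.of_forall fun ξ ↦ by positivity)
    _ = C * (∫ ξ, (1 + ‖ξ‖) ^ (-r) ∂μ) / R ^ Module.finrank ℝ E := by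
        rw [integral_const_mul, Measure.integral_comp_smul μ fun ξ ↦ (1 + ‖ξ‖) ^ (-r),
          abs_of_pos (by positivity), smul_eq_mul]
        ring

variable {d : ℕ} {a : ℝ[Fin d → ℤ]}

lemma ftOmega_jacobiKernel (hmass : ∑' v, a.coeff v = 1) (hsymm : ∀ v, a.coeff (-v) = a.coeff v)
    (n : ℕ) (ξ : Fin d → ℝ) : ftOmega (jacobiKernel a n).coeff ξ =
      (((shiftedJacobi (d / 2) n).eval (sineSymbol a.coeff ξ) : ℝ) : ℂ) := by
  have harg : lift ℝ ℂ (Fin d → ℤ) (latticeChar ξ) ((1 / 2 : ℝ) • (1 - a)) =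
      algebraMap ℝ ℂ (sineSymbol a.coeff ξ) := by
    rw [map_smul, map_sub, map_one, ← ftOmega_coeff, ftOmega_eq_one_sub_sineSymbol hmass hsymm]
    simp
  rw [ftOmega_coeff, jacobiKernel, ← Polynomial.aeval_algHom_apply, harg,
    Polynomial.aeval_algebraMap_apply]
  rfl

lemma mem_Icc_pi_iff {ξ : Fin d → ℝ} :
    ξ ∈ Set.Icc (fun _ ↦ -π) (fun _ ↦ π) ↔ ∀ i, ξ i ∈ Set.Icc (-π) π := by
  simp [Set.mem_Icc, Pi.le_def, forall_and]

lemma exists_pos_forall_mul_norm_sq_le_sineSymbol (hnn : ∀ v, 0 ≤ a.coeff v)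
    (hmass : ∑' v, a.coeff v = 1) (hsymm : ∀ v, a.coeff (-v) = a.coeff v)
    (hQ : (covQ d a.coeff).PosDef)
    (haper : ∀ ξ : Fin d → ℝ, (∀ i, ξ i ∈ Set.Icc (-π) π) → ξ ≠ 0 → ‖ftOmega a.coeff ξ‖ < 1) :
    ∃ c > 0, ∀ ξ ∈ Set.Icc (fun _ : Fin d ↦ -π) (fun _ ↦ π),
      c * ‖ξ‖ ^ 2 ≤ sineSymbol a.coeff ξ := by
  obtain ⟨c, hc, hnear⟩ := eventually_mul_norm_sq_le_sineSymbol hnn hQ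
  exact exists_pos_forall_mul_norm_sq_le_of_isCompact isCompact_Icc (continuous_sineSymbol a)
    (fun ξ hξ hξ₀ ↦
      (sineSymbol_mem_Ioo hmass hsymm (haper ξ (mem_Icc_pi_iff.1 hξ) hξ₀)).1) hc hnear

lemma exists_pos_forall_sineSymbol_le (hmass : ∑' v, a.coeff v = 1)
    (hsymm : ∀ v, a.coeff (-v) = a.coeff v)
    (haper : ∀ ξ : Fin d → ℝ, (∀ i, ξ i ∈ Set.Icc (-π) π) → ξ ≠ 0 → ‖ftOmega a.coeff ξ‖ < 1) :
    ∃ δ > 0, ∀ ξ ∈ Set.Icc (fun _ : Fin d ↦ -π) (fun _ ↦ π), sineSymbol a.coeff ξ ≤ 1 - δ := by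
  have hpos : ∀ ξ ∈ Set.Icc (fun _ : Fin d ↦ -π) (fun _ ↦ π), 0 < 1 - sineSymbol a.coeff ξ := by
    intro ξ hξ
    obtain rfl | hξ₀ := eq_or_ne ξ 0
    · simp [sineSymbol]
    · exact sub_pos.2 (sineSymbol_mem_Ioo hmass hsymm (haper ξ (mem_Icc_pi_iff.1 hξ) hξ₀)).2
  obtain ⟨δ, hδ, hle⟩ := isCompact_Icc.exists_forall_le'
    (continuous_const.sub (continuous_sineSymbol a)).continuousOn hpos
  exact ⟨δ, hδ, fun ξ hξ ↦ le_sub_comm.1 (hle ξ hξ)⟩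

lemma exists_eval_sineSymbol_sq_le (hd : 1 ≤ d) (hnn : ∀ v, 0 ≤ a.coeff v)
    (hmass : ∑' v, a.coeff v = 1) (hsymm : ∀ v, a.coeff (-v) = a.coeff v)
    (hQ : (covQ d a.coeff).PosDef)
    (haper : ∀ ξ : Fin d → ℝ, (∀ i, ξ i ∈ Set.Icc (-π) π) → ξ ≠ 0 → ‖ftOmega a.coeff ξ‖ < 1) :
    ∃ C ≥ 0, ∀ᶠ n : ℕ in atTop, ∀ ξ ∈ Set.Icc (fun _ : Fin d ↦ -π) (fun _ ↦ π),
      (shiftedJacobi (d / 2) n).eval (sineSymbol a.coeff ξ) ^ 2 ≤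
        C * (1 + ‖(n : ℝ) • ξ‖) ^ (-(d + 1 : ℝ)) := by
  obtain ⟨c, hc, hlow⟩ := exists_pos_forall_mul_norm_sq_le_sineSymbol hnn hmass hsymm hQ haper
  obtain ⟨δ, hδ, hupp⟩ := exists_pos_forall_sineSymbol_le hmass hsymm haper
  have hd' : (1 : ℝ) ≤ d := Nat.one_le_cast.2 hd
  obtain ⟨C, hC⟩ := exists_forall_shiftedJacobi_sq_le (α := d / 2) (by linarith) hδ
  set m := min 1 √c
  have hm : 0 < m := lt_min one_pos (sqrt_pos.2 hc)
  refine ⟨|C| * m ^ (-(d + 1 : ℝ)), by positivity, hC.mono fun n hn ξ hξ ↦ ?_⟩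
  have hcomp : m * (1 + ‖(n : ℝ) • ξ‖) ≤ 1 + n * √(sineSymbol a.coeff ξ) := by
    have hsqrt : √c * ‖ξ‖ ≤ √(sineSymbol a.coeff ξ) := by
      rw [← sqrt_sq (norm_nonneg ξ), ← sqrt_mul hc.le]
      exact sqrt_le_sqrt (hlow ξ hξ)
    calc m * (1 + ‖(n : ℝ) • ξ‖) = m * 1 + n * (m * ‖ξ‖) := by
          rw [norm_smul, norm_natCast]
          ring
      _ ≤ 1 * 1 + n * (√c * ‖ξ‖) := by gcongr <;> [exact min_le_left _ _; exact min_le_right _ _]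
      _ ≤ 1 + n * √(sineSymbol a.coeff ξ) := by gcongr; exact (one_mul _).le
  have h := hn _ ⟨sineSymbol_nonneg hnn ξ, hupp ξ hξ⟩
  rw [mul_div_cancel₀ _ two_ne_zero, mul_comm, ← le_div_iff₀ (by positivity), div_eq_mul_inv C,
    ← rpow_neg (by positivity)] at h
  calc _ ≤ C * (1 + n * √(sineSymbol a.coeff ξ)) ^ (-(d + 1 : ℝ)) := h
    _ ≤ |C| * (m * (1 + ‖(n : ℝ) • ξ‖)) ^ (-(d + 1 : ℝ)) := by
        have hrpow := rpow_le_rpow_of_nonpos (by positivity) hcomp (by linarith : -(d + 1 : ℝ) ≤ 0)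
        exact mul_le_mul (le_abs_self C) hrpow (by positivity) (abs_nonneg C)
    _ = _ := by rw [mul_rpow hm.le (by positivity), mul_assoc]

lemma exists_sum_sq_jacobiKernel_le (hd : 1 ≤ d) (hnn : ∀ v, 0 ≤ a.coeff v)
    (hmass : ∑' v, a.coeff v = 1) (hsymm : ∀ v, a.coeff (-v) = a.coeff v)
    (hQ : (covQ d a.coeff).PosDef)
    (haper : ∀ ξ : Fin d → ℝ, (∀ i, ξ i ∈ Set.Icc (-π) π) → ξ ≠ 0 → ‖ftOmega a.coeff ξ‖ < 1) :
    ∃ C, ∀ᶠ n : ℕ in atTop,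
      ∑ v ∈ (jacobiKernel a n).coeff.support, (jacobiKernel a n).coeff v ^ 2 ≤ C / n ^ d := by
  obtain ⟨C, hC, hle⟩ := exists_eval_sineSymbol_sq_le hd hnn hmass hsymm hQ haper
  refine ⟨C * (∫ ξ : Fin d → ℝ, (1 + ‖ξ‖) ^ (-(d + 1 : ℝ))) / (2 * π) ^ d, ?_⟩
  filter_upwards [hle, eventually_gt_atTop 0] with n hn hn₀
  have hparseval := setIntegral_normSq_ftOmega (jacobiKernel a n)
  simp only [ftOmega_jacobiKernel hmass hsymm, Complex.normSq_ofReal, ← sq] at hparseval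
  have hcont := continuous_sineSymbol a
  have h := setIntegral_le_of_le_one_add_norm_smul_rpow volume (by simp) measurableSet_Icc
    (Continuous.integrableOn_Icc (by fun_prop)) hC (Nat.cast_pos.2 hn₀) hn
  rw [hparseval, Module.finrank_fin_fun] at h
  rwa [div_right_comm, le_div_iff₀' (by positivity)]

theorem exists_sum_abs_jacobiKernel_le (hd : 1 ≤ d) (hnn : ∀ v, 0 ≤ a.coeff v)
    (hmass : ∑' v, a.coeff v = 1) (hsymm : ∀ v, a.coeff (-v) = a.coeff v)
    (hQ : (covQ d a.coeff).PosDef)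
    (haper : ∀ ξ : Fin d → ℝ, (∀ i, ξ i ∈ Set.Icc (-π) π) → ξ ≠ 0 → ‖ftOmega a.coeff ξ‖ < 1) :
    ∃ M, ∀ᶠ n : ℕ in atTop,
      ∑ v ∈ (jacobiKernel a n).coeff.support, |(jacobiKernel a n).coeff v| ≤ M := by
  obtain ⟨C, hC⟩ := exists_sum_sq_jacobiKernel_le hd hnn hmass hsymm hQ haper
  obtain ⟨r, hr, hsupp⟩ := exists_nonneg_forall_mem_Icc a.coeff.support
  refine ⟨√((∏ i, (2 * r i + 1) : ℤ) * C), ?_⟩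
  filter_upwards [hC, eventually_ge_atTop 1] with n hn hn₁
  have hsub : (jacobiKernel a n).coeff.support ⊆ Finset.Icc (-(n • r)) (n • r) := fun v hv ↦
    Finset.mem_Icc.2 (mem_Icc_of_coeff_jacobiKernel_ne_zero hr hsupp (Finsupp.mem_support_iff.1 hv))
  have hcard : ((jacobiKernel a n).coeff.support.card : ℝ) ≤ (∏ i, (2 * r i + 1) : ℤ) * n ^ d :=
    (Nat.cast_le.2 (Finset.card_le_card hsub)).trans (card_Icc_nsmul_le hr hn₁)
  refine le_sqrt_of_sq_le ?_
  calc _ ≤ ((jacobiKernel a n).coeff.support.card : ℝ) *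
        ∑ v ∈ (jacobiKernel a n).coeff.support, |(jacobiKernel a n).coeff v| ^ 2 :=
      sq_sum_le_card_mul_sum_sq
    _ ≤ (∏ i, (2 * r i + 1) : ℤ) * n ^ d * (C / n ^ d) := by
      simp only [sq_abs]
      gcongr
      exact (Nat.cast_nonneg _).trans hcard
    _ = (∏ i, (2 * r i + 1) : ℤ) * C := by field_simp

end UniformSummability

/-! ### Convergence of the characteristic functions -/

section CharacteristicFunction

open AddMonoidAlgebra

variable {d : ℕ} {a : ℝ[Fin d → ℤ]} {t : ℝ}

lemma tendsto_nat_floor_div_nhdsGT_zero (ht : 0 < t) :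
    Tendsto (fun ε ↦ ⌊t / ε⌋₊) (𝓝[>] 0) atTop := by
  simp only [div_eq_mul_inv]
  exact tendsto_nat_floor_atTop.comp (tendsto_inv_nhdsGT_zero.const_mul_atTop ht)

lemma tendsto_nat_floor_div_mul (ht : 0 < t) :
    Tendsto (fun ε ↦ ⌊t / ε⌋₊ * ε) (𝓝[>] 0) (𝓝 t) := by
  have h := (tendsto_nat_floor_mul_div_atTop ht.le).comp tendsto_inv_nhdsGT_zero
  refine h.congr fun ε ↦ ?_
  simp [div_eq_mul_inv]

theorem tendsto_ftOmega_jacobiKernel (hnn : ∀ v, 0 ≤ a.coeff v) (hmass : ∑' v, a.coeff v = 1)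
    (hsymm : ∀ v, a.coeff (-v) = a.coeff v) (ht : 0 < t) (ξ : Fin d → ℝ) :
    Tendsto (fun ε : ℝ ↦ ftOmega (jacobiKernel a ⌊t / ε⌋₊).coeff (ε • ξ)) (𝓝[>] 0)
      (𝓝 (normalizedBessel (d / 2) (t ^ 2 * (ξ ⬝ᵥ (covQ d a.coeff *ᵥ ξ)) / 4) : ℂ)) := by
  simp only [ftOmega_jacobiKernel hmass hsymm]
  refine (Complex.continuous_ofReal.tendsto _).comp (tendsto_eval_shiftedJacobi (by positivity)
    (tendsto_nat_floor_div_nhdsGT_zero ht) (.of_forall fun ε ↦ sineSymbol_nonneg hnn _) ?_)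
  have hsymbol := (tendsto_sineSymbol_smul_div_sq a ξ).mono_left (nhdsGT_le_nhdsNE 0)
  rw [mul_div_assoc]
  refine (((tendsto_nat_floor_div_mul ht).pow 2).mul hsymbol).congr' ?_
  filter_upwards [self_mem_nhdsWithin] with ε (hε : 0 < ε)
  field_simp

end CharacteristicFunction

/-! ### Fourier transform of a ball -/

section HomogeneousIntegral

variable {E : Type*} [NormedAddCommGroup E] [NormedSpace ℝ E] [FiniteDimensional ℝ E]
  [MeasurableSpace E] [BorelSpace E] [Nontrivial E] (μ : Measure E) [μ.IsAddHaarMeasure]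
  {h : E → ℝ} {m : ℕ}

lemma integral_homogeneous_mul_fun_norm_addHaar (hh : ∀ r > 0, ∀ x, h (r • x) = r ^ m * h x)
    (φ : ℝ → ℝ) : ∫ x, h x * φ ‖x‖ ∂μ = (∫ s, h (s : E) ∂μ.toSphere) *
      ∫ r in Set.Ioi (0 : ℝ), r ^ (Module.finrank ℝ E - 1 + m) * φ r := by
  have polar (p : Metric.sphere (0 : E) 1 × Set.Ioi (0 : ℝ)) :
      h (((homeomorphUnitSphereProd E).symm p : ({0}ᶜ : Set E)) : E) *
        φ ‖(((homeomorphUnitSphereProd E).symm p : ({0}ᶜ : Set E)) : E)‖ =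
      h p.1 * ((p.2 : ℝ) ^ m * φ p.2) := by
    rcases p with ⟨⟨s, hs⟩, ⟨r, hr : 0 < r⟩⟩
    have hs1 : ‖s‖ = 1 := by simpa using hs
    simp only [homeomorphUnitSphereProd_symm_apply_coe, hh r hr, norm_smul, hs1, mul_one,
      norm_of_nonneg hr.le]
    ring
  have radial : ∫ r : Set.Ioi (0 : ℝ), (r : ℝ) ^ m * φ r
        ∂.volumeIoiPow (Module.finrank ℝ E - 1) =
      ∫ r in Set.Ioi (0 : ℝ), r ^ (Module.finrank ℝ E - 1 + m) * φ r := by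
    simp only [Measure.volumeIoiPow, ENNReal.ofReal]
    rw [integral_withDensity_eq_integral_smul (measurable_subtype_coe.pow_const _).real_toNNReal,
      integral_subtype_comap measurableSet_Ioi
        fun r ↦ (r ^ (Module.finrank ℝ E - 1)).toNNReal • (r ^ m * φ r)]
    refine setIntegral_congr_fun measurableSet_Ioi fun r (hr : 0 < r) ↦ ?_
    simp only [NNReal.smul_def, coe_toNNReal _ (pow_nonneg hr.le _), smul_eq_mul]
    ring
  rw [← radial, ← integral_prod_mul, ← integral_congr_ae (.of_forall polar),
    ← μ.measurePreserving_homeomorphUnitSphereProd.integral_comp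
      (Homeomorph.measurableEmbedding _)]
  simp only [Homeomorph.symm_apply_apply]
  rw [integral_subtype_comap (measurableSet_singleton _).compl fun x ↦ h x * φ ‖x‖,
    restrict_compl_singleton]

lemma integral_homogeneous_mul_exp_neg_norm_sq (hh : ∀ r > 0, ∀ x, h (r • x) = r ^ m * h x) :
    ∫ x, h x * exp (-‖x‖ ^ 2) ∂μ =
      Gamma ((Module.finrank ℝ E + m) / 2 + 1) * ∫ x in Metric.closedBall 0 1, h x ∂μ := by
  set n := Module.finrank ℝ E
  have hn : 0 < n := Module.finrank_pos
  have hcast : ((n - 1 + m : ℕ) : ℝ) + 1 = n + m := by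
    rw [← Nat.cast_add_one, ← Nat.cast_add]; congr 1; omega
  have gaussian : ∫ r in Set.Ioi (0 : ℝ), r ^ (n - 1 + m) * exp (-r ^ 2) =
      1 / 2 * Gamma ((n + m) / 2) := by
    have h := integral_rpow_mul_exp_neg_rpow (p := 2) (q := (n - 1 + m : ℕ)) two_pos
      (by linarith [Nat.cast_nonneg (α := ℝ) (n - 1 + m)])
    simpa only [rpow_natCast, rpow_ofNat, hcast] using h
  have ball : ∫ r in Set.Ioi (0 : ℝ), r ^ (n - 1 + m) * (Set.Iic 1).indicator 1 r =
      1 / (n + m) := by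
    have hind (r : ℝ) : r ^ (n - 1 + m) * (Set.Iic 1).indicator 1 r =
        (Set.Iic 1).indicator (fun r ↦ r ^ (n - 1 + m)) r := by simp [Set.indicator]
    simp_rw [hind]
    rw [setIntegral_indicator measurableSet_Iic, Set.Ioi_inter_Iic,
      ← intervalIntegral.integral_of_le zero_le_one, integral_pow, hcast]
    simp
  have hball : ∫ x in Metric.closedBall 0 1, h x ∂μ =
      ∫ x, h x * (Set.Iic (1 : ℝ)).indicator 1 ‖x‖ ∂μ := by
    rw [← integral_indicator measurableSet_closedBall]
    congr! 2 with x
    simp [Set.indicator]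
  rw [hball, integral_homogeneous_mul_fun_norm_addHaar μ hh fun r ↦ exp (-r ^ 2), gaussian,
    integral_homogeneous_mul_fun_norm_addHaar μ hh, ball, Gamma_add_one (by positivity)]
  field_simp

end HomogeneousIntegral

section GaussianMoment

variable {E : Type*} [NormedAddCommGroup E] [InnerProductSpace ℝ E] [FiniteDimensional ℝ E]
  [MeasurableSpace E] [BorelSpace E]

lemma integral_comp_inner_norm_congr {F : Type*} [NormedAddCommGroup F] [NormedSpace ℝ F]
    {v w : E} (hvw : ‖v‖ = ‖w‖) (g : ℝ → ℝ → F) :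
    ∫ x, g (inner ℝ v x) ‖x‖ = ∫ x, g (inner ℝ w x) ‖x‖ := by
  set L := (ℝ ∙ (v - w))ᗮ.reflection
  have hL : L v = w := Submodule.reflection_sub hvw
  rw [← L.measurePreserving.integral_comp L.toHomeomorph.measurableEmbedding
    fun x ↦ g (inner ℝ w x) ‖x‖]
  simp only [← hL, L.inner_map_map, L.norm_map]

lemma Gamma_natCast_add_half (k : ℕ) :
    Gamma (k + 1 / 2) = √π * ((2 * k).factorial / (4 ^ k * k.factorial)) := by
  induction k with
  | zero => simp [Gamma_one_half_eq, -one_div]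
  | succ k ih =>
    rw [Nat.cast_succ, add_right_comm, Gamma_add_one (by positivity), ih,
      show 2 * (k + 1) = 2 * k + 1 + 1 by ring, Nat.factorial_succ, Nat.factorial_succ,
      Nat.factorial_succ]
    push_cast
    field_simp
    ring

lemma integral_pow_mul_exp_neg_sq (k : ℕ) :
    ∫ x : ℝ, x ^ (2 * k) * exp (-x ^ 2) = Gamma (k + 1 / 2) := by
  have habs (x : ℝ) : x ^ (2 * k) * exp (-x ^ 2) =
      (fun y ↦ y ^ (2 * k) * exp (-y ^ 2)) |x| := by simp [pow_mul]
  have h := integral_rpow_mul_exp_neg_rpow (p := 2) (q := (2 * k : ℕ)) two_pos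
    (by linarith [Nat.cast_nonneg (α := ℝ) (2 * k)])
  simp only [rpow_natCast, rpow_ofNat] at h
  rw [integral_congr_ae (.of_forall habs), integral_comp_abs
    (f := fun y ↦ y ^ (2 * k) * exp (-y ^ 2)), h, Nat.cast_mul, Nat.cast_ofNat]
  ring_nf

variable {ι : Type*} [Fintype ι]

lemma integral_coord_pow_mul_exp_neg_norm_sq (i : ι) (k : ℕ) :
    ∫ x : EuclideanSpace ℝ ι, x i ^ (2 * k) * exp (-‖x‖ ^ 2) =
      √π ^ Fintype.card ι * ((2 * k).factorial / (4 ^ k * k.factorial)) := by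
  classical
  have hprod (x : ι → ℝ) : x i ^ (2 * k) * exp (-‖WithLp.toLp 2 x‖ ^ 2) =
      ∏ j, x j ^ (2 * if j = i then k else 0) * exp (-x j ^ 2) := by
    rw [EuclideanSpace.real_norm_sq_eq, ← Finset.sum_neg_distrib, exp_sum, Finset.prod_mul_distrib]
    simp
  have hmoment : ∏ j : ι, Gamma ((if j = i then k else 0 : ℕ) + 1 / 2) =
      √π ^ Fintype.card ι * ((2 * k).factorial / (4 ^ k * k.factorial)) := by
    have hconst (j) (hj : j ∈ Finset.univ.erase i) :
        Gamma ((if j = i then k else 0 : ℕ) + 1 / 2) = √π := by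
      rw [if_neg (Finset.ne_of_mem_erase hj), Nat.cast_zero, zero_add, Gamma_one_half_eq]
    rw [← Finset.prod_erase_mul _ _ (Finset.mem_univ i), Finset.prod_congr rfl hconst,
      Finset.prod_const, if_pos rfl, ← Finset.card_univ,
      ← Finset.card_erase_add_one (Finset.mem_univ i), pow_succ, Gamma_natCast_add_half]
    ring
  rw [← (PiLp.volume_preserving_toLp ι).integral_comp
    (MeasurableEquiv.toLp 2 (ι → ℝ)).measurableEmbedding]
  simp_rw [hprod, ← hmoment, ← integral_pow_mul_exp_neg_sq]
  exact integral_fintype_prod_volume_eq_prod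
    fun j x ↦ x ^ (2 * if j = i then k else 0) * exp (-x ^ 2)

lemma integral_inner_pow_mul_exp_neg_norm_sq [Nonempty ι] (η : EuclideanSpace ℝ ι) (k : ℕ) :
    ∫ x, inner ℝ η x ^ (2 * k) * exp (-‖x‖ ^ 2) =
      √π ^ Fintype.card ι * ((2 * k).factorial / (4 ^ k * k.factorial)) * ‖η‖ ^ (2 * k) := by
  classical
  obtain ⟨i⟩ := ‹Nonempty ι›
  have hη : ‖η‖ = ‖EuclideanSpace.single i ‖η‖‖ := by simp
  rw [integral_comp_inner_norm_congr hη fun s r ↦ s ^ (2 * k) * exp (-r ^ 2)]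
  simp only [EuclideanSpace.inner_single_left, mul_pow, mul_assoc, integral_const_mul,
    integral_coord_pow_mul_exp_neg_norm_sq, conj_trivial]
  ring

end GaussianMoment

section BallFourier

variable {ι : Type*} [Fintype ι]

lemma setIntegral_closedBall_inner_pow [Nonempty ι] (η : EuclideanSpace ℝ ι) (k : ℕ) :
    ∫ x in Metric.closedBall 0 1, inner ℝ η x ^ (2 * k) =
      √π ^ Fintype.card ι * ((2 * k).factorial / (4 ^ k * k.factorial)) * ‖η‖ ^ (2 * k) /
        Gamma (Fintype.card ι / 2 + 1 + k) := by
  have h := integral_homogeneous_mul_exp_neg_norm_sq (volume : Measure (EuclideanSpace ℝ ι))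
    (h := fun x ↦ inner ℝ η x ^ (2 * k)) (m := 2 * k) fun r _ x ↦ by
      rw [real_inner_smul_right, mul_pow]
  have hG : (Fintype.card ι + (2 * k : ℕ)) / 2 + 1 = (Fintype.card ι / 2 + 1 + k : ℝ) := by
    push_cast
    ring
  rw [integral_inner_pow_mul_exp_neg_norm_sq, finrank_euclideanSpace, hG] at h
  rw [h, mul_div_cancel_left₀ _ (Gamma_pos_of_pos (by positivity)).ne']

lemma hasSum_setIntegral_closedBall_cos_inner (η : EuclideanSpace ℝ ι) :
    HasSum (fun k : ℕ ↦ ∫ x in Metric.closedBall 0 1,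
        (-1) ^ k * inner ℝ η x ^ (2 * k) / (2 * k).factorial)
      (∫ x in Metric.closedBall 0 1, cos (inner ℝ η x)) := by
  have : IsFiniteMeasure
      ((volume : Measure (EuclideanSpace ℝ ι)).restrict (Metric.closedBall 0 1)) :=
    isFiniteMeasure_restrict.2 (isCompact_closedBall _ _).measure_lt_top.ne
  refine hasSum_integral_of_dominated_convergence
    (fun k _ ↦ ‖η‖ ^ (2 * k) / (2 * k).factorial)
    (fun k ↦ Continuous.aestronglyMeasurable (by fun_prop)) (fun k ↦ ?_) (.of_forall fun _ ↦ ?_)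
    (integrable_const _) (.of_forall fun x ↦ hasSum_cos _)
  · refine ae_restrict_of_forall_mem measurableSet_closedBall fun x hx ↦ ?_
    have hinner : |inner ℝ η x| ≤ ‖η‖ := (abs_real_inner_le_norm _ _).trans
      (mul_le_of_le_one_right (norm_nonneg _) (mem_closedBall_zero_iff.1 hx))
    simp only [norm_div, norm_mul, norm_pow, norm_neg, norm_one, one_pow, one_mul,
      RCLike.norm_natCast, norm_eq_abs]
    gcongr
  · exact (summable_pow_div_factorial ‖η‖).comp_injective fun _ _ h ↦ by simpa using h

theorem setIntegral_closedBall_cos_inner [Nonempty ι] (η : EuclideanSpace ℝ ι) :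
    Gamma (Fintype.card ι / 2 + 1) / √π ^ Fintype.card ι *
        ∫ x in Metric.closedBall 0 1, cos (inner ℝ η x) =
      normalizedBessel (Fintype.card ι / 2) (‖η‖ ^ 2 / 4) := by
  rw [← ((hasSum_setIntegral_closedBall_cos_inner η).mul_left _).tsum_eq, normalizedBessel]
  refine tsum_congr fun k ↦ ?_
  simp_rw [mul_div_right_comm, integral_const_mul, setIntegral_closedBall_inner_pow]
  have := (Gamma_pos_of_pos (show 0 < (Fintype.card ι / 2 + 1 + k : ℝ) by positivity)).ne'
  rw [← neg_div, div_pow, neg_pow]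
  field_simp
  rw [one_pow, mul_one, pow_mul, neg_pow (‖η‖ ^ 2)]

lemma setIntegral_closedBall_sin_inner (η : EuclideanSpace ℝ ι) :
    ∫ x in Metric.closedBall 0 1, sin (inner ℝ η x) = 0 := by
  have hneg := integral_comp_inner_norm_congr (norm_neg η)
    fun s r ↦ (Set.Iic (1 : ℝ)).indicator (fun _ ↦ sin s) r
  have hind (ζ x : EuclideanSpace ℝ ι) :
      (Set.Iic (1 : ℝ)).indicator (fun _ ↦ sin (inner ℝ ζ x)) ‖x‖ =
        (Metric.closedBall 0 1).indicator (fun x ↦ sin (inner ℝ ζ x)) x := by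
    simp [Set.indicator]
  simp_rw [hind, integral_indicator measurableSet_closedBall, inner_neg_left, sin_neg,
    integral_neg] at hneg
  linarith

theorem setIntegral_closedBall_cexp_inner [Nonempty ι] (η : EuclideanSpace ℝ ι) :
    ((Gamma (Fintype.card ι / 2 + 1) / √π ^ Fintype.card ι : ℝ) : ℂ) *
        ∫ x in Metric.closedBall 0 1, Complex.exp (Complex.I * inner ℝ η x) =
      normalizedBessel (Fintype.card ι / 2) (‖η‖ ^ 2 / 4) := by
  have euler (x : EuclideanSpace ℝ ι) : Complex.exp (Complex.I * inner ℝ η x) =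
      (cos (inner ℝ η x) : ℂ) + (sin (inner ℝ η x) : ℂ) * Complex.I := by
    rw [mul_comm, Complex.exp_mul_I, Complex.ofReal_cos, Complex.ofReal_sin]
  have hcompact := isCompact_closedBall (0 : EuclideanSpace ℝ ι) 1
  simp_rw [euler]
  rw [integral_add (ContinuousOn.integrableOn_compact hcompact (by fun_prop))
    (ContinuousOn.integrableOn_compact hcompact (by fun_prop)), integral_mul_const,
    integral_complex_ofReal, integral_complex_ofReal, setIntegral_closedBall_sin_inner,
    Complex.ofReal_zero, zero_mul, add_zero, ← Complex.ofReal_mul, setIntegral_closedBall_cos_inner]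

end BallFourier

/-! ### Fourier transform of an ellipsoid -/

section Ellipsoid

variable {ι : Type*} [Fintype ι] [DecidableEq ι] {P : Matrix ι ι ℝ}

/-- The solid ellipsoid `⟨y, P⁻¹ y⟩ ≤ 1`, which is the image of the Euclidean unit ball under `A`
whenever `P = A Aᵀ`. -/
def ellipsoid (P : Matrix ι ι ℝ) : Set (ι → ℝ) := {y | y ⬝ᵥ (P⁻¹ *ᵥ y) ≤ 1}

lemma ellipsoid_sq_smul (hP : P.PosDef) {t : ℝ} (ht : 0 < t) :
    ellipsoid (t ^ 2 • P) = {y | y ⬝ᵥ (P⁻¹ *ᵥ y) ≤ t ^ 2} := by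
  ext y
  have hinv : (t ^ 2 • P)⁻¹ = (t ^ 2)⁻¹ • P⁻¹ :=
    P.inv_smul' (Units.mk0 (t ^ 2) (by positivity)) ((isUnit_iff_isUnit_det P).1 hP.isUnit)
  rw [ellipsoid, Set.mem_ofPred_eq, Set.mem_ofPred_eq, hinv, smul_mulVec, dotProduct_smul,
    smul_eq_mul, inv_mul_le_one₀ (by positivity)]

open scoped MatrixOrder in
lemma exists_eq_mul_transpose_of_posDef (hP : P.PosDef) :
    ∃ A : Matrix ι ι ℝ, P = A * Aᵀ ∧ IsUnit A := by
  obtain ⟨A, hA⟩ := CStarAlgebra.nonneg_iff_eq_mul_star_self.mp hP.posSemidef.nonneg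
  rw [star_eq_conjTranspose, conjTranspose_eq_transpose_of_trivial] at hA
  exact ⟨A, hA, isUnit_of_mul_isUnit_left (hA ▸ hP.isUnit)⟩

lemma mulVec_mem_ellipsoid_iff {A : Matrix ι ι ℝ} (hA : IsUnit A) (z : ι → ℝ) :
    A *ᵥ z ∈ ellipsoid (A * Aᵀ) ↔ ‖WithLp.toLp 2 z‖ ≤ 1 := by
  have hA' : IsUnit A.det := (isUnit_iff_isUnit_det A).1 hA
  have hquad : (A *ᵥ z) ⬝ᵥ ((A * Aᵀ)⁻¹ *ᵥ (A *ᵥ z)) = ‖WithLp.toLp 2 z‖ ^ 2 := by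
    rw [Matrix.mul_inv_rev, mulVec_mulVec, Matrix.mul_assoc, nonsing_inv_mul _ hA', Matrix.mul_one,
      ← transpose_nonsing_inv, ← vecMul_transpose, ← dotProduct_mulVec, mulVec_mulVec,
      ← transpose_mul, nonsing_inv_mul _ hA', transpose_one, one_mulVec,
      EuclideanSpace.real_norm_sq_eq]
    simp [dotProduct, sq]
  rw [ellipsoid, Set.mem_ofPred_eq, hquad, sq_le_one_iff₀ (norm_nonneg _)]

lemma ellipsoid_mul_transpose {A : Matrix ι ι ℝ} (hA : IsUnit A) :
    ellipsoid (A * Aᵀ) = (A *ᵥ ·) '' (WithLp.toLp 2 ⁻¹' Metric.closedBall 0 1) := by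
  ext y
  constructor
  · obtain ⟨z, rfl⟩ := mulVec_surjective_iff_isUnit.2 hA y
    exact fun hz ↦ ⟨z, by simpa using (mulVec_mem_ellipsoid_iff hA z).1 hz, rfl⟩
  · rintro ⟨z, hz, rfl⟩
    exact (mulVec_mem_ellipsoid_iff hA z).2 (by simpa using hz)

lemma isCompact_ellipsoid (hP : P.PosDef) : IsCompact (ellipsoid P) := by
  obtain ⟨A, rfl, hA⟩ := exists_eq_mul_transpose_of_posDef hP
  rw [ellipsoid_mul_transpose hA]
  exact (((PiLp.homeomorph 2 fun _ : ι ↦ ℝ).symm.isCompact_preimage).2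
    (isCompact_closedBall 0 1)).image (by fun_prop)

lemma setIntegral_image_mulVec {F : Type*} [NormedAddCommGroup F] [NormedSpace ℝ F]
    {A : Matrix ι ι ℝ} (hA : IsUnit A) {s : Set (ι → ℝ)} (hs : MeasurableSet s)
    (g : (ι → ℝ) → F) :
    ∫ y in (A *ᵥ ·) '' s, g y = |A.det| • ∫ z in s, g (A *ᵥ z) := by
  have hderiv (z : ι → ℝ) :
      HasFDerivWithinAt (A *ᵥ ·) (toLin' A).toContinuousLinearMap s z :=
    (toLin' A).toContinuousLinearMap.hasFDerivWithinAt
  rw [integral_image_eq_integral_abs_det_fderiv_smul volume hs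
    (fun z _ ↦ hderiv z) (mulVec_injective_of_isUnit hA).injOn g,
    LinearMap.det_toContinuousLinearMap, LinearMap.det_toLin', integral_smul]

theorem setIntegral_ellipsoid_cexp [Nonempty ι] (hP : P.PosDef) (ξ : ι → ℝ) :
    ((Gamma (Fintype.card ι / 2 + 1) / (√π ^ Fintype.card ι * √P.det) : ℝ) : ℂ) *
        ∫ y in ellipsoid P, Complex.exp (Complex.I * (ξ ⬝ᵥ y : ℝ)) =
      normalizedBessel (Fintype.card ι / 2) ((ξ ⬝ᵥ (P *ᵥ ξ)) / 4) := by
  obtain ⟨A, rfl, hA⟩ := exists_eq_mul_transpose_of_posDef hP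
  have hdet : √(A * Aᵀ).det = |A.det| := by
    rw [det_mul, det_transpose, sqrt_mul_self_eq_abs]
  have hdet_ne : ((|A.det| : ℝ) : ℂ) ≠ 0 := by
    simpa using ((isUnit_iff_isUnit_det A).1 hA).ne_zero
  have hnorm : ‖WithLp.toLp 2 (Aᵀ *ᵥ ξ)‖ ^ 2 = ξ ⬝ᵥ ((A * Aᵀ) *ᵥ ξ) := by
    rw [EuclideanSpace.real_norm_sq_eq, ← mulVec_mulVec, dotProduct_mulVec, ← mulVec_transpose]
    simp [dotProduct, sq]
  have hinner (z : EuclideanSpace ℝ ι) :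
      ξ ⬝ᵥ (A *ᵥ z.ofLp) = inner ℝ (WithLp.toLp 2 (Aᵀ *ᵥ ξ)) z := by
    rw [EuclideanSpace.inner_eq_star_dotProduct, star_trivial, dotProduct_comm z.ofLp,
      dotProduct_mulVec, mulVec_transpose]
  rw [← hnorm, ← setIntegral_closedBall_cexp_inner, hdet, ellipsoid_mul_transpose hA,
    setIntegral_image_mulVec hA
      (Metric.isClosed_closedBall.preimage (by fun_prop)).measurableSet,
    ← (PiLp.volume_preserving_toLp ι).setIntegral_preimage_emb
      (MeasurableEquiv.toLp 2 (ι → ℝ)).measurableEmbedding]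
  simp_rw [← hinner, Complex.real_smul]
  push_cast
  field_simp

end Ellipsoid

/-! ### Functionals bounded by a supremum over a compact set -/

section StoneWeierstrass

variable {ι X 𝕜 : Type*} [RCLike 𝕜] [TopologicalSpace X] {K K' : Set X} {M M' : ℝ} {l : Filter ι}

/-- A linear functional on continuous functions bounded by `M` times the supremum of the norm
over `K`, i.e. integration against a measure of total variation at most `M` carried by `K`. -/
def IsBoundedBySupOn (Λ : C(X, 𝕜) →ₗ[𝕜] 𝕜) (K : Set X) (M : ℝ) : Prop :=
  ∀ g : C(X, 𝕜), ∀ r, 0 ≤ r → (∀ x ∈ K, ‖g x‖ ≤ r) → ‖Λ g‖ ≤ M * r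

lemma IsBoundedBySupOn.mono {Λ : C(X, 𝕜) →ₗ[𝕜] 𝕜} (h : IsBoundedBySupOn Λ K M) (hK : K ⊆ K')
    (hM : M ≤ M') : IsBoundedBySupOn Λ K' M' := fun g r hr hg ↦
  (h g r hr fun x hx ↦ hg x (hK hx)).trans (mul_le_mul_of_nonneg_right hM hr)

lemma IsBoundedBySupOn.const_smul {Λ : C(X, 𝕜) →ₗ[𝕜] 𝕜} (h : IsBoundedBySupOn Λ K M) (c : 𝕜) :
    IsBoundedBySupOn (c • Λ) K (‖c‖ * M) := fun g r hr hg ↦ by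
  rw [LinearMap.smul_apply, norm_smul, mul_assoc]
  exact mul_le_mul_of_nonneg_left (h g r hr hg) (norm_nonneg c)

lemma exists_mem_starSubalgebra_near_of_isCompact {A : StarSubalgebra 𝕜 C(X, 𝕜)}
    (hA : A.SeparatesPoints) (hK : IsCompact K) (f : C(X, 𝕜)) {δ : ℝ} (hδ : 0 < δ) :
    ∃ g ∈ A, ∀ x ∈ K, ‖f x - g x‖ < δ := by
  have := isCompact_iff_compactSpace.1 hK
  let restrict : C(X, 𝕜) →⋆ₐ[𝕜] C(K, 𝕜) :=
    ContinuousMap.compStarAlgHom' 𝕜 𝕜 ⟨Subtype.val, continuous_subtype_val⟩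
  have hsep : (A.map restrict).SeparatesPoints := by
    intro x y hxy
    obtain ⟨_, ⟨g, hg, rfl⟩, hne⟩ := hA (Subtype.coe_ne_coe.2 hxy)
    exact ⟨_, ⟨restrict g, ⟨g, hg, rfl⟩, rfl⟩, hne⟩
  have hdense : restrict f ∈ (A.map restrict).topologicalClosure := by
    rw [ContinuousMap.starSubalgebra_topologicalClosure_eq_top_of_separatesPoints _ hsep]
    trivial
  obtain ⟨_, ⟨g, hg, rfl⟩, hdist⟩ := Metric.mem_closure_iff.1 hdense δ hδ
  refine ⟨g, hg, fun x hx ↦ ?_⟩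
  rw [← dist_eq_norm]
  exact (ContinuousMap.dist_apply_le_dist (f := restrict f) ⟨x, hx⟩).trans_lt hdist

theorem tendsto_of_tendsto_of_separatesPoints {Λ : ι → C(X, 𝕜) →ₗ[𝕜] 𝕜} {Λ₀ : C(X, 𝕜) →ₗ[𝕜] 𝕜}
    (hK : IsCompact K) (hΛ : ∀ᶠ i in l, IsBoundedBySupOn (Λ i) K M)
    (hΛ₀ : IsBoundedBySupOn Λ₀ K M') {A : StarSubalgebra 𝕜 C(X, 𝕜)} (hA : A.SeparatesPoints)
    (h : ∀ g ∈ A, Tendsto (fun i ↦ Λ i g) l (𝓝 (Λ₀ g))) (f : C(X, 𝕜)) :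
    Tendsto (fun i ↦ Λ i f) l (𝓝 (Λ₀ f)) := by
  rw [Metric.tendsto_nhds]
  intro δ hδ
  obtain ⟨r, hr, hrδ⟩ : ∃ r > 0, (M + M') * r < δ / 2 := by
    have hlim : Tendsto (fun r ↦ (M + M') * r) (𝓝[>] 0) (𝓝 0) :=
      tendsto_nhdsWithin_of_tendsto_nhds <|
        Continuous.tendsto' (by fun_prop) 0 0 (mul_zero _)
    obtain ⟨r, hlt, hr⟩ :=
      ((hlim.eventually_lt_const (half_pos hδ)).and self_mem_nhdsWithin).exists
    exact ⟨r, hr, hlt⟩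
  obtain ⟨g, hg, hfg⟩ := exists_mem_starSubalgebra_near_of_isCompact hA hK f hr
  filter_upwards [hΛ, Metric.tendsto_nhds.1 (h g hg) (δ / 2) (half_pos hδ)] with i hi hgi
  have h₁ := hi (f - g) r hr.le fun x hx ↦ (hfg x hx).le
  have h₂ := hΛ₀ (f - g) r hr.le fun x hx ↦ (hfg x hx).le
  rw [map_sub, ← dist_eq_norm] at h₁ h₂
  calc dist (Λ i f) (Λ₀ f)
      ≤ dist (Λ i f) (Λ i g) + dist (Λ i g) (Λ₀ g) + dist (Λ₀ g) (Λ₀ f) := dist_triangle4 ..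
    _ < δ := by rw [dist_comm (Λ₀ g)]; linarith

end StoneWeierstrass

section Characters

open BoundedContinuousFunction

variable {ι V W : Type*} [AddCommGroup V] [Module ℝ V] [TopologicalSpace V] [AddCommGroup W]
  [Module ℝ W] [TopologicalSpace W] {e : AddChar ℝ Circle} {L : V →ₗ[ℝ] W →ₗ[ℝ] ℝ} {l : Filter ι}
  {K : Set V} {M M' : ℝ}

theorem tendsto_of_tendsto_char {Λ : ι → C(V, ℂ) →ₗ[ℂ] ℂ} {Λ₀ : C(V, ℂ) →ₗ[ℂ] ℂ}
    (hK : IsCompact K) (hΛ : ∀ᶠ i in l, IsBoundedBySupOn (Λ i) K M)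
    (hΛ₀ : IsBoundedBySupOn Λ₀ K M') (he : Continuous e) (he' : e ≠ 1)
    (hL : Continuous fun p : V × W ↦ L p.1 p.2) (hL' : ∀ v ≠ 0, L v ≠ 0)
    (h : ∀ w, Tendsto (fun i ↦ Λ i (char he hL w).toContinuousMap) l
      (𝓝 (Λ₀ (char he hL w).toContinuousMap))) (f : C(V, ℂ)) :
    Tendsto (fun i ↦ Λ i f) l (𝓝 (Λ₀ f)) := by
  refine tendsto_of_tendsto_of_separatesPoints hK hΛ hΛ₀
    (separatesPoints_charPoly he he' hL hL') ?_ f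
  rintro _ ⟨_, ⟨p, rfl⟩, rfl⟩
  have hp : (toContinuousMapStarₐ ℂ (charAlgHom he hL p) : C(V, ℂ)) =
      ∑ w ∈ p.coeff.support, p.coeff w • (char he hL w).toContinuousMap := by
    ext v
    simp [Finsupp.sum]
  change Tendsto (fun i ↦ Λ i (toContinuousMapStarₐ ℂ (charAlgHom he hL p))) l
    (𝓝 (Λ₀ (toContinuousMapStarₐ ℂ (charAlgHom he hL p))))
  simp only [hp, map_sum, map_smul]
  exact tendsto_finsetSum _ fun w _ ↦ (h w).const_smul _

end Characters

section CompactIntegral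

variable {X : Type*} [TopologicalSpace X] [T2Space X] [MeasurableSpace X] [OpensMeasurableSpace X]
  (μ : Measure X) [IsFiniteMeasureOnCompacts μ] {K : Set X}

/-- Integration over a compact set, as a linear functional on continuous functions. -/
def compactIntegral (hK : IsCompact K) : C(X, ℂ) →ₗ[ℂ] ℂ where
  toFun f := ∫ x in K, f x ∂μ
  map_add' f g := integral_add (f.continuous.continuousOn.integrableOn_compact hK)
    (g.continuous.continuousOn.integrableOn_compact hK)
  map_smul' c _ := integral_smul c _

lemma isBoundedBySupOn_compactIntegral (hK : IsCompact K) :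
    IsBoundedBySupOn (compactIntegral μ hK) K (μ.real K) := fun g r _ hg ↦ by
  rw [mul_comm]
  exact norm_setIntegral_le_of_norm_le_const hK.measure_lt_top hg

end CompactIntegral

/-! ### Weak convergence -/

section WeakConvergence

open AddMonoidAlgebra BoundedContinuousFunction

variable {d : ℕ} {a b : ℝ[Fin d → ℤ]} {K : Set (Fin d → ℝ)} {t ε : ℝ}

/-- Summation over the scaled lattice `ε ℤ ^ d` against the signed weight `b`, as a linear
functional on continuous functions. -/
def scaledSum (b : ℝ[Fin d → ℤ]) (ε : ℝ) : C(Fin d → ℝ, ℂ) →ₗ[ℂ] ℂ where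
  toFun f := ∑ v ∈ b.coeff.support, (b.coeff v : ℂ) * f fun i ↦ ε * v i
  map_add' f g := by simp [mul_add, Finset.sum_add_distrib]
  map_smul' c f := by simp [mul_left_comm, Finset.mul_sum]

lemma scaledSum_ofReal (b : ℝ[Fin d → ℤ]) (ε : ℝ) {f : (Fin d → ℝ) → ℝ} (hf : Continuous f) :
    scaledSum b ε ⟨fun y ↦ (f y : ℂ), by fun_prop⟩ =
      ((∑' v, b.coeff v * f fun i ↦ ε * v i : ℝ) : ℂ) := by
  have hsum : ∑' v, b.coeff v * (f fun i ↦ ε * v i) =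
      ∑ v ∈ b.coeff.support, b.coeff v * f fun i ↦ ε * v i := tsum_coeff_mul b _
  simp [scaledSum, hsum]

lemma isBoundedBySupOn_scaledSum (h : ∀ v ∈ b.coeff.support, (fun i ↦ ε * v i) ∈ K) :
    IsBoundedBySupOn (scaledSum b ε) K (∑ v ∈ b.coeff.support, |b.coeff v|) := fun g r _ hg ↦ by
  rw [Finset.sum_mul]
  refine norm_sum_le_of_le _ fun v hv ↦ ?_
  rw [norm_mul, Complex.norm_real, Real.norm_eq_abs]
  exact mul_le_mul_of_nonneg_left (hg _ (h v hv)) (abs_nonneg _)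

lemma continuous_dotProductBilin :
    Continuous fun p : (Fin d → ℝ) × (Fin d → ℝ) ↦ dotProductBilin ℝ ℝ p.1 p.2 := by
  simp only [dotProductBilin, dotProduct]
  fun_prop

lemma scaledSum_char (b : ℝ[Fin d → ℤ]) (ε : ℝ) (ξ : Fin d → ℝ) :
    scaledSum b ε (char continuous_probChar continuous_dotProductBilin ξ).toContinuousMap =
      ftOmega b.coeff (ε • ξ) := by
  refine Eq.trans ?_ (tsum_coeff_mul b fun v ↦
    Complex.exp (Complex.I * ((∑ i, (ε • ξ) i * (v i : ℝ) : ℝ) : ℂ))).symm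
  refine Finset.sum_congr rfl fun v _ ↦ ?_
  simp [dotProduct, probChar_apply, mul_assoc, mul_comm, mul_left_comm]

lemma exists_isCompact_forall_mem_jacobiKernel (a : ℝ[Fin d → ℤ]) (ht : 0 ≤ t) :
    ∃ K : Set (Fin d → ℝ), IsCompact K ∧
      ∀ ε > 0, ∀ v ∈ (jacobiKernel a ⌊t / ε⌋₊).coeff.support, (fun i ↦ ε * (v i : ℝ)) ∈ K := by
  obtain ⟨r, hr, ha⟩ := exists_nonneg_forall_mem_Icc a.coeff.support
  refine ⟨Set.Icc (fun i ↦ -(t * r i)) fun i ↦ t * r i, isCompact_Icc, fun ε hε v hv ↦ ?_⟩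
  obtain ⟨hlow, hupp⟩ :=
    mem_Icc_of_coeff_jacobiKernel_ne_zero hr ha (Finsupp.mem_support_iff.1 hv)
  have hfloor : ε * ⌊t / ε⌋₊ ≤ t :=
    (le_div_iff₀' hε).1 (Nat.floor_le (by positivity))
  have hscale (i : Fin d) : ε * (⌊t / ε⌋₊ * r i : ℝ) ≤ t * r i := by
    rw [← mul_assoc]
    exact mul_le_mul_of_nonneg_right hfloor (Int.cast_nonneg (hr i))
  have hlow' (i : Fin d) : -(⌊t / ε⌋₊ * r i : ℝ) ≤ v i := by exact_mod_cast hlow i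
  have hupp' (i : Fin d) : (v i : ℝ) ≤ ⌊t / ε⌋₊ * r i := by exact_mod_cast hupp i
  refine ⟨fun i ↦ ?_, fun i ↦ (mul_le_mul_of_nonneg_left (hupp' i) hε.le).trans (hscale i)⟩
  calc -(t * r i) ≤ -(ε * (⌊t / ε⌋₊ * r i : ℝ)) := neg_le_neg (hscale i)
    _ = ε * -(⌊t / ε⌋₊ * r i : ℝ) := (mul_neg _ _).symm
    _ ≤ ε * v i := mul_le_mul_of_nonneg_left (hlow' i) hε.le

theorem tendsto_scaledSum_jacobiKernel (hd : 1 ≤ d) (hnn : ∀ v, 0 ≤ a.coeff v)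
    (hmass : ∑' v, a.coeff v = 1) (hsymm : ∀ v, a.coeff (-v) = a.coeff v)
    (hQ : (covQ d a.coeff).PosDef)
    (haper : ∀ ξ : Fin d → ℝ, (∀ i, ξ i ∈ Set.Icc (-π) π) → ξ ≠ 0 → ‖ftOmega a.coeff ξ‖ < 1)
    (ht : 0 < t) (f : C(Fin d → ℝ, ℂ)) :
    Tendsto (fun ε ↦ scaledSum (jacobiKernel a ⌊t / ε⌋₊) ε f) (𝓝[>] 0)
      (𝓝 ((Gamma (d / 2 + 1) / (√π ^ d * √(t ^ 2 • covQ d a.coeff).det) : ℝ) *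
        ∫ y in ellipsoid (t ^ 2 • covQ d a.coeff), f y)) := by
  have : Nonempty (Fin d) := ⟨⟨0, hd⟩⟩
  have hP : (t ^ 2 • covQ d a.coeff).PosDef := hQ.smul (by positivity)
  obtain ⟨M, hM⟩ := exists_sum_abs_jacobiKernel_le hd hnn hmass hsymm hQ haper
  obtain ⟨K, hK, hmem⟩ := exists_isCompact_forall_mem_jacobiKernel a ht.le
  have hE := isCompact_ellipsoid hP
  refine tendsto_of_tendsto_char (M := M) (Λ₀ := _ • compactIntegral volume hE) (hK.union hE) ?_
    (((isBoundedBySupOn_compactIntegral volume hE).const_smul _).mono Set.subset_union_right le_rfl)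
    continuous_probChar probChar_ne_one continuous_dotProductBilin (fun v hv h ↦ ?_)
    (fun ξ ↦ ?_) f
  · filter_upwards [(tendsto_nat_floor_div_nhdsGT_zero ht).eventually hM, self_mem_nhdsWithin]
      with ε hε hpos
    exact (isBoundedBySupOn_scaledSum (hmem ε hpos)).mono Set.subset_union_left hε
  · exact hv (dotProduct_self_eq_zero.1 (LinearMap.congr_fun h v))
  · have hball := setIntegral_ellipsoid_cexp hP ξ
    simp only [Fintype.card_fin, smul_mulVec, dotProduct_smul, smul_eq_mul] at hball
    have hchar := tendsto_ftOmega_jacobiKernel hnn hmass hsymm ht ξ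
    simp only [scaledSum_char]
    convert hchar using 2
    rw [← hball]
    simp [compactIntegral, probChar_apply, dotProduct_comm, mul_comm Complex.I]

lemma sqrt_pi_pow_mul_sqrt_det_sq_smul (ht : 0 ≤ t) (Q : Matrix (Fin d) (Fin d) ℝ) :
    √π ^ d * √(t ^ 2 • Q).det = π ^ ((d : ℝ) / 2) * √Q.det * t ^ d := by
  have hpi : √π ^ d = π ^ ((d : ℝ) / 2) := by
    rw [sqrt_eq_rpow, ← rpow_mul_natCast pi_pos.le, one_div_mul_eq_div]
  rw [hpi, det_smul, Fintype.card_fin, ← pow_mul, mul_comm 2, pow_mul, sqrt_mul (sq_nonneg _),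
    sqrt_sq (pow_nonneg ht d), mul_assoc, mul_comm (t ^ d)]

end WeakConvergence

theorem jacobi_iteration_weak_convergence_general {d : ℕ} (hd : 1 ≤ d) {ω : (Fin d → ℤ) → ℝ}
    (hfin : (Function.support ω).Finite) (hnn : ∀ v, 0 ≤ ω v) (hmass : ∑' v, ω v = 1)
    (hsymm : ∀ v, ω (-v) = ω v) (hQ : (covQ d ω).PosDef)
    (haper : ∀ ξ : Fin d → ℝ, (∀ i, ξ i ∈ Set.Icc (-π) π) → ξ ≠ 0 → ‖ftOmega ω ξ‖ < 1)
    {x : ℕ → (Fin d → ℤ) → ℝ} (hx0 : ∀ v, x 0 v = if v = 0 then 1 else 0)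
    (hx1 : ∀ v, x 1 v = aCoef0 d * latticeConv ω (x 0) v + bCoef0 d * x 0 v)
    (hrec : ∀ n, 1 ≤ n → ∀ v,
      x (n + 1) v = aCoef d n * latticeConv ω (x n) v + bCoef d n * x n v - cCoef d n * x (n - 1) v)
    {t : ℝ} (ht : 0 < t) {f : (Fin d → ℝ) → ℝ} (hf : Continuous f) :
    Tendsto (fun ε ↦ ∑' v, x ⌊t / ε⌋₊ v * f fun i ↦ ε * v i) (𝓝[>] 0)
      (𝓝 (Gamma (d / 2 + 1) / (π ^ ((d : ℝ) / 2) * √(covQ d ω).det * t ^ d) *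
        ∫ y in {y | y ⬝ᵥ ((covQ d ω)⁻¹ *ᵥ y) ≤ t ^ 2}, f y)) := by
  obtain ⟨a, rfl⟩ : ∃ a : AddMonoidAlgebra ℝ (Fin d → ℤ), ω = a.coeff :=
    ⟨.ofCoeff (Finsupp.ofSupportFinite ω hfin), rfl⟩
  have hlim := tendsto_scaledSum_jacobiKernel hd hnn hmass hsymm hQ haper ht
    ⟨fun y ↦ (f y : ℂ), by fun_prop⟩
  simp only [scaledSum_ofReal _ _ hf, ContinuousMap.coe_mk, integral_complex_ofReal,
    sqrt_pi_pow_mul_sqrt_det_sq_smul ht.le, ellipsoid_sq_smul hQ ht] at hlim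
  rw [← Complex.ofReal_mul, tendsto_ofReal_iff] at hlim
  simpa only [jacobi_iteration_eq_jacobiKernel hd a x hx0 hx1 hrec] using hlim

/-- Weak convergence of the Jacobi polynomial iteration to the fundamental solution of the
Euler–Poisson–Darboux equation. -/
theorem jacobi_iteration_weak_convergence
    (d : ℕ) (hd : 1 ≤ d) (ω : (Fin d → ℤ) → ℝ)
    (hfin : (Function.support ω).Finite) (hnn : ∀ v, 0 ≤ ω v)
    (hmass : ∑' v : Fin d → ℤ, ω v = 1) (hsymm : ∀ v, ω (-v) = ω v)
    (hQ : (covQ d ω).PosDef)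
    (haper : ∀ ξ : Fin d → ℝ, (∀ i, ξ i ∈ Set.Icc (-π) π) → ξ ≠ 0 →
      ‖ftOmega ω ξ‖ < 1)
    (x : ℕ → (Fin d → ℤ) → ℝ)
    (hx0 : ∀ v, x 0 v = if v = 0 then 1 else 0)
    (hx1 : ∀ v, x 1 v = aCoef0 d * latticeConv ω (x 0) v + bCoef0 d * x 0 v)
    (hrec : ∀ n, 1 ≤ n → ∀ v,
      x (n + 1) v = aCoef d n * latticeConv ω (x n) v + bCoef d n * x n v - cCoef d n * x (n - 1) v)
    (t : ℝ) (ht : 0 < t)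
    (f : (Fin d → ℝ) → ℝ) (hf : Continuous f) (hfb : ∃ M, ∀ y, |f y| ≤ M) :
    Tendsto (fun ε : ℝ => ∑' v : Fin d → ℤ, x ⌊t / ε⌋₊ v * f (fun i => ε * (v i : ℝ)))
      (𝓝[>] 0)
      (𝓝 ((Real.Gamma ((d : ℝ) / 2 + 1) /
            (π ^ ((d : ℝ) / 2) * Real.sqrt (covQ d ω).det * t ^ d)) *
          ∫ y in {y : Fin d → ℝ | y ⬝ᵥ ((covQ d ω)⁻¹ *ᵥ y) ≤ t ^ 2}, f y)) :=
  jacobi_iteration_weak_convergence_general hd hfin hnn hmass hsymm hQ haper hx0 hx1 hrec ht hf
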